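/- arXiv:2401.01027 — 3 statements merged into one kernel-verified Lean document; each statement's English description precedes it below -/
import Mathlib

section
/- For integers l ≥ 1 and m ≥ 2, X_{P_l} · X_{C_m} = Σ_{I ⊨ l, J ⊨ m} j_1 · w_{IJ} · e_{IJ} = Σ_{K ⊨ l+m, Θ_K^+(l) = 0} (Θ_K^+(l+1) + 1) · w_K · e_K, where j_1 is the first part of J. -/
open Finset

/-- Symmetric functions in countably many variables `x_0, x_1, x_2, …`, realized inside
the ring of formal multivariate power series over `ℚ`. -/
abbrev SymF : Type := MvPowerSeries ℕ ℚ

open Classical in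
/-- The elementary symmetric function `e_k`: the sum of all squarefree monomials of
degree `k` (so `e_0 = 1`). -/
noncomputable def esymm (k : ℕ) : SymF :=
  fun d : ℕ →₀ ℕ =>
    if (d.sum fun _ e => e) = k ∧ ∀ i, d i ≤ 1 then (1 : ℚ) else 0

/-- `e_I = e_{i_1} ⋯ e_{i_s}` for a list `I = [i_1, …, i_s]`. -/
noncomputable def esymmProd (I : List ℕ) : SymF := (I.map esymm).prod

open Classical in
/-- The chromatic symmetric function `X_G = Σ_κ ∏_v x_{κ v}`, summed over proper colorings
`κ : V → ℕ`: the coefficient of the monomial with exponent vector `d` is the number of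
proper colorings all of whose color fibres have the sizes recorded by `d`. -/
noncomputable def csf {V : Type} [Finite V] (G : SimpleGraph V) : SymF :=
  fun d : ℕ →₀ ℕ =>
    (({κ : V → ℕ | (∀ v w, G.Adj v w → κ v ≠ κ w) ∧
        ∀ i : ℕ, {v | κ v = i}.ncard = d i}).ncard : ℚ)

/-- `w_I = i_1 ∏_{j ≥ 2} (i_j - 1)`, with `w_ε = 1`. -/
def wC : List ℕ → ℕ
  | [] => 1
  | h :: t => h * (t.map (· - 1)).prod

/-- The path `P_n` on vertices `0, 1, …, n-1`. -/
def pathG (n : ℕ) : SimpleGraph (Fin n) :=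
  SimpleGraph.fromRel (fun i j => (i : ℕ) + 1 = (j : ℕ))

/-- The cycle `C_n` on vertices `0, 1, …, n-1` (for `n = 2` this is `K_2`). -/
def cycleG (n : ℕ) : SimpleGraph (Fin n) :=
  SimpleGraph.fromRel (fun i j =>
    (i : ℕ) + 1 = (j : ℕ) ∨ ((i : ℕ) = 0 ∧ (j : ℕ) = n - 1))

/-- `σ_I^+(a)`: the smallest prefix sum of `I` that is at least `a`. -/
noncomputable def sigmaPlus (I : List ℕ) (a : ℕ) : ℕ :=
  sInf {m | (∃ k ≤ I.length, (I.take k).sum = m) ∧ a ≤ m}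

/-- `Θ_I^+(a) = σ_I^+(a) - a`. -/
noncomputable def thetaPlus (I : List ℕ) (a : ℕ) : ℕ := sigmaPlus I a - a

/-!
The product formula follows from the expansions `X_{P_l} = ∑ w_I e_I` (`csf_path`) and
`X_{C_m} = ∑ (j_1 - 1) w_J e_J` (`csf_cycle`), since `w_I · (j_1 - 1) w_J = j_1 w_{IJ}`
(`wC_append`). The second form reindexes the double sum by concatenation `(I, J) ↦ IJ`, whose
image consists of the compositions of `l + m` having `l` as a prefix sum (`sum_append_eq`).

Both expansions are proved by generating functions. Setting all but finitely many variables to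
zero (`trunc`) loses nothing (`eq_of_trunc`) and turns `X_{P_n}` and `X_{C_n}` into finite sums
over words without equal neighbours. Fix the first letter `c`, and let `F_c` and `H_c` be the
generating functions in `z` of linear and cyclic words starting with `c`, and `P = 1 + ∑ F_c`.
Removing the first letter gives `(1 + x_c z) F_c = x_c z P`, and removing the last letter of a
word that starts and ends with `c` gives `(1 + x_c z) H_c = F_c - x_c z`. With
`E = ∏ (1 + x_c z) = ∑ e_k z^k`, summation over `c` yields `P (E - z E') = E` and
`(∑ H_c) (E - z E') = z² E''` (`genFun_identities`). Since `E - z E' = 1 - ∑ (k - 1) e_k z^k`, its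
inverse enumerates compositions with weight `∏ (i_j - 1) e_{i_j}` (`tailSeries_eq`), and the
factors `z E'` and `z² E''` supply the first part, with weights `i_1` and `i_1 (i_1 - 1)`.
-/

/-! ### Words without equal neighbours -/

/-- A nonempty word `κ` is a Carlitz word if no two consecutive letters are equal, that is,
if it is a proper coloring of a path. -/
def Carlitz {ι : Type*} {n : ℕ} (κ : Fin (n + 1) → ι) : Prop := ∀ i : Fin n, κ i.castSucc ≠ κ i.succ

lemma carlitz_cons {ι : Type*} {n : ℕ} (a : ι) (κ : Fin (n + 1) → ι) :
    Carlitz (Fin.cons a κ : Fin (n + 2) → ι) ↔ a ≠ κ 0 ∧ Carlitz κ := by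
  unfold Carlitz
  rw [Fin.forall_fin_succ]
  simp

lemma carlitz_snoc {ι : Type*} {n : ℕ} (a : ι) (κ : Fin (n + 1) → ι) :
    Carlitz (Fin.snoc κ a : Fin (n + 2) → ι) ↔ Carlitz κ ∧ κ (Fin.last n) ≠ a := by
  unfold Carlitz
  rw [Fin.forall_fin_succ']
  refine and_congr (forall_congr' fun i => ?_) ?_
  · rw [Fin.snoc_castSucc (α := fun _ => ι), Fin.succ_castSucc,
      Fin.snoc_castSucc (α := fun _ => ι)]
  · rw [Fin.snoc_castSucc (α := fun _ => ι), Fin.succ_last, Fin.snoc_last (α := fun _ => ι)]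

section Words

variable {ι R : Type*} [Fintype ι] [DecidableEq ι] [CommRing R]

instance {n : ℕ} (κ : Fin (n + 1) → ι) : Decidable (Carlitz κ) := by
  unfold Carlitz; infer_instance

/-- The weight enumerator `∑ ∏ x` of Carlitz words of length `n + 1` over the alphabet `ι`. -/
def pathSum (x : ι → R) (n : ℕ) : R :=
  ∑ κ : Fin (n + 1) → ι, if Carlitz κ then ∏ i, x (κ i) else 0

/-- The weight enumerator of Carlitz words of length `n + 1` whose last and first letters differ.
For `n = 0` it vanishes, as no one-letter word qualifies. -/
def cycleSum (x : ι → R) (n : ℕ) : R :=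
  ∑ κ : Fin (n + 1) → ι, if Carlitz κ ∧ κ (Fin.last n) ≠ κ 0 then ∏ i, x (κ i) else 0

/-- The part of `pathSum x n` coming from words with first letter `c`. -/
def pathFrom (x : ι → R) (n : ℕ) (c : ι) : R :=
  ∑ κ : Fin (n + 1) → ι, if Carlitz κ ∧ κ 0 = c then ∏ i, x (κ i) else 0

/-- The part of `cycleSum x n` coming from words with first letter `c`. -/
def cycleFrom (x : ι → R) (n : ℕ) (c : ι) : R :=
  ∑ κ : Fin (n + 1) → ι,
    if (Carlitz κ ∧ κ (Fin.last n) ≠ κ 0) ∧ κ 0 = c then ∏ i, x (κ i) else 0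

lemma sum_pathFrom (x : ι → R) (n : ℕ) : ∑ c, pathFrom x n c = pathSum x n := by
  unfold pathFrom pathSum
  rw [Finset.sum_comm]
  refine Finset.sum_congr rfl fun κ _ => ?_
  simp [ite_and]

lemma sum_cycleFrom (x : ι → R) (n : ℕ) : ∑ c, cycleFrom x n c = cycleSum x n := by
  unfold cycleFrom cycleSum
  rw [Finset.sum_comm]
  refine Finset.sum_congr rfl fun κ _ => ?_
  by_cases h : Carlitz κ ∧ κ (Fin.last n) ≠ κ 0 <;> simp [h]

lemma pathFrom_zero (x : ι → R) (c : ι) : pathFrom x 0 c = x c := by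
  unfold pathFrom
  rw [← (Equiv.funUnique (Fin 1) ι).symm.sum_comp]
  simp [Carlitz]

lemma cycleFrom_zero (x : ι → R) (c : ι) : cycleFrom x 0 c = 0 := by
  unfold cycleFrom
  simp

/-- Removing the first letter `c` leaves a Carlitz word that does not start with `c`. -/
lemma pathFrom_succ (x : ι → R) (n : ℕ) (c : ι) :
    pathFrom x (n + 1) c = x c * (pathSum x n - pathFrom x n c) := by
  unfold pathFrom pathSum
  rw [← (Fin.consEquiv fun _ : Fin (n + 2) => ι).sum_comp, Fintype.sum_prod_type,
    ← Finset.sum_sub_distrib, Finset.mul_sum, Finset.sum_comm]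
  refine Finset.sum_congr rfl fun κ _ => ?_
  rw [Finset.sum_eq_single c]
  · simp only [Fin.consEquiv, Equiv.coe_fn_mk, carlitz_cons, Fin.cons_zero, Fin.prod_univ_succ,
      Fin.cons_succ]
    by_cases h : Carlitz κ <;> by_cases h' : κ 0 = c <;> simp [h, h', eq_comm]
    intro h2; exact absurd h2.symm h'
  · intro a _ ha
    simp [Fin.consEquiv, ha]
  · simp

/-- A Carlitz word that starts with `c` either has a last letter different from `c`, or it arises
by appending `c` to a shorter Carlitz word starting, but not ending, with `c`. -/
lemma cycleFrom_succ (x : ι → R) (n : ℕ) (c : ι) :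
    cycleFrom x (n + 1) c = pathFrom x (n + 1) c - x c * cycleFrom x n c := by
  -- Words that start and end with `c`; the last letter is removed.
  have key : ∑ κ : Fin (n + 2) → ι, (if (Carlitz κ ∧ κ (Fin.last (n + 1)) = κ 0) ∧ κ 0 = c
      then ∏ i, x (κ i) else 0) = x c * cycleFrom x n c := by
    unfold cycleFrom
    rw [← (Fin.snocEquiv fun _ : Fin (n + 2) => ι).sum_comp, Fintype.sum_prod_type,
      Finset.mul_sum, Finset.sum_comm]
    refine Finset.sum_congr rfl fun κ _ => ?_
    have h0 : ∀ a : ι, (Fin.snoc κ a : Fin (n + 2) → ι) 0 = κ 0 := fun a =>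
      Fin.snoc_castSucc (α := fun _ => ι) a κ 0
    rw [Finset.sum_eq_single c]
    · simp only [Fin.snocEquiv, Equiv.coe_fn_mk, carlitz_snoc, Fin.snoc_last, h0,
        Fin.prod_univ_castSucc (n := n + 1), Fin.snoc_castSucc]
      by_cases h : κ 0 = c
      · simp [h, mul_comm]
      · simp [h]
    · intro a _ ha
      simp only [Fin.snocEquiv, Equiv.coe_fn_mk, Fin.snoc_last, h0]
      rw [if_neg]
      rintro ⟨⟨-, h⟩, h'⟩
      exact ha (h.trans h')
    · simp
  rw [← key]
  unfold cycleFrom pathFrom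
  rw [← Finset.sum_sub_distrib]
  refine Finset.sum_congr rfl fun κ _ => ?_
  by_cases h : Carlitz κ ∧ κ 0 = c
  · by_cases h' : κ (Fin.last (n + 1)) = c <;> simp [h, h']
  · have h1 : ∀ p : Prop, ¬ ((Carlitz κ ∧ p) ∧ κ 0 = c) := fun p hp => h ⟨hp.1.1, hp.2⟩
    rw [if_neg (h1 _), if_neg h, if_neg (h1 _), sub_zero]

end Words

/-! ### Compositions as lists -/

section Lists

/-- The compositions of `n`, as lists of positive integers with sum `n`. -/
def compLists (n : ℕ) : Finset (List ℕ) := univ.image (Composition.blocks (n := n))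

lemma mem_compLists {n : ℕ} {l : List ℕ} :
    l ∈ compLists n ↔ l.sum = n ∧ ∀ i ∈ l, 0 < i := by
  unfold compLists
  simp only [mem_image, mem_univ, true_and]
  constructor
  · rintro ⟨c, rfl⟩
    exact ⟨c.blocks_sum, fun i hi => c.blocks_pos hi⟩
  · rintro ⟨h, h'⟩
    exact ⟨⟨l, fun {i} hi => h' i hi, h⟩, rfl⟩

lemma sum_composition {M : Type*} [AddCommMonoid M] (n : ℕ) (f : List ℕ → M) :
    ∑ c : Composition n, f c.blocks = ∑ l ∈ compLists n, f l := by
  unfold compLists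
  rw [Finset.sum_image]
  intro a _ b _ h
  exact Composition.ext h

lemma sum_compLists_zero {M : Type*} [AddCommMonoid M] (f : List ℕ → M) :
    ∑ l ∈ compLists 0, f l = f [] := by
  have : compLists 0 = {[]} := by
    ext l
    rw [mem_compLists, mem_singleton]
    constructor
    · rintro ⟨h, h'⟩
      rw [List.sum_eq_zero_iff] at h
      cases l with
      | nil => rfl
      | cons a t => exact absurd (h a (by simp)) (h' a (by simp)).ne'
    · rintro rfl; simp
  rw [this, sum_singleton]

/-- A composition of `n + 1` is a first part `k + 1` followed by a composition of `n - k`. -/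
lemma sum_compLists_succ {M : Type*} [AddCommMonoid M] (n : ℕ) (f : List ℕ → M) :
    ∑ l ∈ compLists (n + 1), f l =
      ∑ k ∈ range (n + 1), ∑ t ∈ compLists (n - k), f ((k + 1) :: t) := by
  rw [Finset.sum_sigma']
  symm
  refine Finset.sum_bij (fun p _ => (p.1 + 1) :: p.2) ?_ ?_ ?_ ?_
  · rintro ⟨k, t⟩ h
    simp only [mem_sigma, mem_range, mem_compLists] at h ⊢
    refine ⟨by simp; omega, ?_⟩
    simpa using h.2.2
  · rintro ⟨k, t⟩ _ ⟨k', t'⟩ _ h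
    simp only [List.cons.injEq] at h
    obtain ⟨h1, rfl⟩ := h
    obtain rfl : k = k' := by omega
    rfl
  · intro l hl
    rw [mem_compLists] at hl
    cases l with
    | nil => simp at hl
    | cons a t =>
      have ha : 0 < a := hl.2 a (by simp)
      have hs := hl.1
      simp only [List.sum_cons] at hs
      refine ⟨⟨a - 1, t⟩, ?_, ?_⟩
      · simp only [mem_sigma, mem_range, mem_compLists]
        exact ⟨by omega, by omega, fun i hi => hl.2 i (by simp [hi])⟩
      · simp; omega
  · intros; rfl

/-- For `I ⊨ l` and `J ⊨ m`, the sum `l` is a prefix sum of `IJ`, and the next prefix sum is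
`l + j_1`. -/
lemma theta_append {l m : ℕ} (hm : 1 ≤ m) {I J : List ℕ} (hI : I ∈ compLists l)
    (hJ : J ∈ compLists m) :
    thetaPlus (I ++ J) l = 0 ∧ thetaPlus (I ++ J) (l + 1) + 1 = J.headI := by
  rw [mem_compLists] at hI hJ
  constructor
  · unfold thetaPlus sigmaPlus
    have : sInf {m | (∃ k ≤ (I ++ J).length, ((I ++ J).take k).sum = m) ∧ l ≤ m} ≤ l :=
      Nat.sInf_le ⟨⟨I.length, by simp, by simp [hI.1]⟩, le_rfl⟩
    omega
  · cases J with
    | nil => simp at hJ; omega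
    | cons j J =>
      have hj := hJ.2 j (by simp)
      have : IsLeast {m | (∃ k ≤ (I ++ j :: J).length, ((I ++ j :: J).take k).sum = m) ∧
          l + 1 ≤ m} (l + j) := by
        refine ⟨⟨⟨I.length + 1, by simp, by
          rw [List.take_length_add_append]; simp [hI.1]⟩, by omega⟩, ?_⟩
        rintro a ⟨⟨k, -, rfl⟩, h⟩
        rcases le_or_gt k I.length with hk | hk
        · exfalso
          rw [List.take_append_of_le_length hk] at h
          have h1 := congrArg List.sum (List.take_append_drop k I)
          rw [List.sum_append] at h1
          omega
        · obtain ⟨r, rfl⟩ : ∃ r, k = I.length + (r + 1) := ⟨k - I.length - 1, by omega⟩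
          rw [List.take_length_add_append]; simp [hI.1]
      have h2 : sigmaPlus (I ++ j :: J) (l + 1) = l + j := this.csInf_eq
      simp only [thetaPlus, h2, List.headI]
      omega

/-- A composition with `Θ^+(l) = 0` has `l` as a prefix sum, so it can be cut there. -/
lemma exists_append {l m : ℕ} {K : List ℕ} (hK : K ∈ compLists (l + m))
    (h : thetaPlus K l = 0) : ∃ I ∈ compLists l, ∃ J ∈ compLists m, I ++ J = K := by
  rw [mem_compLists] at hK
  have hne : {a | (∃ k ≤ K.length, (K.take k).sum = a) ∧ l ≤ a}.Nonempty :=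
    ⟨l + m, ⟨K.length, le_rfl, by simp [hK.1]⟩, by omega⟩
  obtain ⟨⟨k, -, hk⟩, hl⟩ := Nat.sInf_mem hne
  have hs : (K.take k).sum = l := by
    unfold thetaPlus sigmaPlus at h
    omega
  have h1 := congrArg List.sum (List.take_append_drop k K)
  rw [List.sum_append, hK.1] at h1
  exact ⟨K.take k, mem_compLists.2 ⟨hs, fun i hi => hK.2 i (List.mem_of_mem_take hi)⟩,
    K.drop k, mem_compLists.2 ⟨by omega, fun i hi => hK.2 i (List.mem_of_mem_drop hi)⟩,
    List.take_append_drop k K⟩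

lemma append_inj_of_sum {l : ℕ} {I I' J J' : List ℕ} (hI : I ∈ compLists l)
    (hI' : I' ∈ compLists l) (h : I ++ J = I' ++ J') : I = I' ∧ J = J' := by
  rw [mem_compLists] at hI hI'
  have nil_of : ∀ a : List ℕ, (∀ i ∈ a, 0 < i) → a.sum = 0 → a = [] := by
    intro a ha hs
    rw [List.sum_eq_zero_iff] at hs
    exact List.eq_nil_iff_forall_not_mem.2 fun i hi => (ha i hi).ne' (hs i hi)
  rcases List.append_eq_append_iff.1 h with ⟨a, rfl, rfl⟩ | ⟨a, rfl, rfl⟩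
  · obtain rfl := nil_of a (fun i hi => hI'.2 i (by simp [hi])) (by
      have := hI'.1
      simp [hI.1] at this
      simpa using this)
    simp
  · obtain rfl := nil_of a (fun i hi => hI.2 i (by simp [hi])) (by
      have := hI.1
      simp [hI'.1] at this
      simpa using this)
    simp

/-- Concatenation is a bijection from pairs `(I, J)`, `I ⊨ l`, `J ⊨ m`, onto the compositions `K`
of `l + m` with `Θ_K^+(l) = 0`, and it turns `j_1` into `Θ_K^+(l + 1) + 1`. -/
lemma sum_append_eq {M : Type*} [AddCommMonoid M] {l m : ℕ} (hm : 1 ≤ m)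
    (f : ℕ → List ℕ → M) :
    ∑ I ∈ compLists l, ∑ J ∈ compLists m, f J.headI (I ++ J) =
      ∑ K ∈ compLists (l + m),
        if thetaPlus K l = 0 then f (thetaPlus K (l + 1) + 1) K else 0 := by
  rw [← Finset.sum_product', ← Finset.sum_filter]
  refine Finset.sum_bij (fun p _ => p.1 ++ p.2) ?_ ?_ ?_ ?_
  · rintro ⟨I, J⟩ h
    rw [mem_product] at h
    rw [mem_filter]
    refine ⟨?_, (theta_append hm h.1 h.2).1⟩
    have h1 := mem_compLists.1 h.1
    have h2 := mem_compLists.1 h.2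
    refine mem_compLists.2 ⟨by simp [h1.1, h2.1], fun i hi => ?_⟩
    rcases List.mem_append.1 hi with hi | hi
    · exact h1.2 i hi
    · exact h2.2 i hi
  · rintro ⟨I, J⟩ h ⟨I', J'⟩ h' heq
    rw [mem_product] at h h'
    obtain ⟨h1, h2⟩ := append_inj_of_sum h.1 h'.1 heq
    exact Prod.ext h1 h2
  · intro K hK
    rw [mem_filter] at hK
    obtain ⟨I, hI, J, hJ, rfl⟩ := exists_append hK.1 hK.2
    exact ⟨(I, J), mem_product.2 ⟨hI, hJ⟩, rfl⟩
  · rintro ⟨I, J⟩ h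
    rw [mem_product] at h
    rw [(theta_append hm h.1 h.2).2]

end Lists

/-! ### Restriction to finitely many variables -/

section Trunc

/-- Substituting `x_i = 0` for every `i ∉ S`, on underlying power series. -/
noncomputable def truncFun (S : Finset ℕ) (f : SymF) : SymF :=
  fun d : ℕ →₀ ℕ => if d.support ⊆ S then MvPowerSeries.coeff d f else 0

lemma coeff_truncFun (S : Finset ℕ) (f : SymF) (d : ℕ →₀ ℕ) :
    MvPowerSeries.coeff d (truncFun S f) =
      if d.support ⊆ S then MvPowerSeries.coeff d f else 0 := rfl

/-- The ring endomorphism `x_i ↦ 0` for `i ∉ S`, `x_i ↦ x_i` for `i ∈ S`. -/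
noncomputable def trunc (S : Finset ℕ) : SymF →+* SymF where
  toFun := truncFun S
  map_one' := by
    classical
    ext d
    rw [coeff_truncFun, MvPowerSeries.coeff_one]
    split_ifs with h h' <;> simp_all
  map_mul' f g := by
    ext d
    rw [coeff_truncFun, MvPowerSeries.coeff_mul, MvPowerSeries.coeff_mul]
    have hs : ∀ p ∈ antidiagonal d, d.support = p.1.support ∪ p.2.support := by
      intro p hp
      rw [HasAntidiagonal.mem_antidiagonal] at hp
      ext i
      simp [← hp]
      tauto
    simp only [coeff_truncFun]
    split_ifs with h
    · refine sum_congr rfl fun p hp => ?_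
      rw [hs p hp, union_subset_iff] at h
      rw [if_pos h.1, if_pos h.2]
    · symm
      refine sum_eq_zero fun p hp => ?_
      rw [hs p hp, union_subset_iff, not_and_or] at h
      rcases h with h | h <;> simp [h]
  map_zero' := by
    ext d
    simp [coeff_truncFun]
  map_add' f g := by
    ext d
    simp only [coeff_truncFun, map_add]
    split_ifs <;> simp

lemma coeff_trunc (S : Finset ℕ) (f : SymF) (d : ℕ →₀ ℕ) :
    MvPowerSeries.coeff d (trunc S f) =
      if d.support ⊆ S then MvPowerSeries.coeff d f else 0 := rfl

/-- Each coefficient involves only finitely many variables, so the truncations jointly determine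
a power series. -/
lemma eq_of_trunc {f g : SymF} (h : ∀ S, trunc S f = trunc S g) : f = g := by
  ext d
  have := congrArg (MvPowerSeries.coeff d) (h d.support)
  simpa [coeff_trunc] using this

lemma prod_X_eq {α : Type*} (t : Finset α) (g : α → ℕ) :
    ∏ i ∈ t, (MvPowerSeries.X (g i) : SymF) =
      MvPowerSeries.monomial (∑ i ∈ t, Finsupp.single (g i) 1) (1 : ℚ) := by
  classical
  induction t using Finset.induction_on with
  | empty => simp
  | insert a t ha ih =>
    rw [prod_insert ha, sum_insert ha, ih, MvPowerSeries.X, MvPowerSeries.monomial_mul_monomial,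
      one_mul]

lemma trunc_esymm (S : Finset ℕ) (k : ℕ) :
    trunc S (esymm k) =
      ∑ t ∈ powersetCard k S, ∏ i ∈ t, (MvPowerSeries.X i : SymF) := by
  classical
  ext d
  rw [coeff_trunc, map_sum]
  have hval : ∀ (t : Finset ℕ) (i : ℕ),
      (∑ j ∈ t, Finsupp.single j 1 : ℕ →₀ ℕ) i = if i ∈ t then 1 else 0 := by
    intro t i
    simp [Finsupp.finsetSum_apply, Finsupp.single_apply]
  have hsupp : ∀ t : Finset ℕ, (∑ j ∈ t, Finsupp.single j 1 : ℕ →₀ ℕ).support = t := by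
    intro t; ext i; simp [Finsupp.mem_support_iff, hval]
  have hc : ∀ t : Finset ℕ, MvPowerSeries.coeff d (∏ i ∈ t, (MvPowerSeries.X i : SymF)) =
      if d = ∑ j ∈ t, Finsupp.single j 1 then 1 else 0 := by
    intro t
    rw [prod_X_eq t (fun i => i), MvPowerSeries.coeff_monomial]
  simp only [hc]
  change (if d.support ⊆ S then
    (if (d.sum fun _ e => e) = k ∧ ∀ i, d i ≤ 1 then (1 : ℚ) else 0) else 0) = _
  by_cases hd : d.support ⊆ S ∧ (d.sum fun _ e => e) = k ∧ ∀ i, d i ≤ 1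
  · rw [if_pos hd.1, if_pos hd.2]
    have hdd : d = ∑ j ∈ d.support, Finsupp.single j 1 := by
      ext i
      rw [hval]
      have := hd.2.2 i
      split_ifs with hi
      · rw [Finsupp.mem_support_iff] at hi; omega
      · simpa using hi
    have hcard : d.support.card = k := by
      rw [← hd.2.1, Finsupp.sum, card_eq_sum_ones]
      refine sum_congr rfl fun i hi => ?_
      have := hd.2.2 i
      rw [Finsupp.mem_support_iff] at hi; omega
    rw [sum_eq_single d.support, if_pos hdd]
    · intro t _ ht
      rw [if_neg]
      rintro rfl
      exact ht (hsupp t).symm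
    · intro h
      exact absurd (mem_powersetCard.2 ⟨hd.1, hcard⟩) h
  · have : (if d.support ⊆ S then
      (if (d.sum fun _ e => e) = k ∧ ∀ i, d i ≤ 1 then (1 : ℚ) else 0) else 0) = 0 := by
      split_ifs <;> first | rfl | (exfalso; tauto)
    rw [this]
    symm
    refine sum_eq_zero fun t ht => if_neg ?_
    rintro rfl
    rw [mem_powersetCard] at ht
    refine hd ⟨by rw [hsupp]; exact ht.1, ?_, fun i => ?_⟩
    · rw [Finsupp.sum, hsupp, ← ht.2, card_eq_sum_ones]
      exact sum_congr rfl fun i hi => by rw [hval, if_pos hi]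
    · rw [hval]; split_ifs <;> omega

/-- With only the variables in `S` left, the chromatic symmetric function is a finite sum over
proper colorings with colors in `S`. -/
lemma trunc_csf (S : Finset ℕ) {V : Type} [Fintype V] [DecidableEq V] (G : SimpleGraph V)
    (Q : (V → S) → Prop) [DecidablePred Q]
    (hQ : ∀ κ : V → S, Q κ ↔ ∀ v w, G.Adj v w → κ v ≠ κ w) :
    trunc S (csf G) =
      ∑ κ : V → S, if Q κ then ∏ v, (MvPowerSeries.X (κ v : ℕ) : SymF) else 0 := by
  classical
  ext d
  rw [coeff_trunc, map_sum]
  have hval : ∀ (κ : V → S) (i : ℕ), (∑ v, Finsupp.single (κ v : ℕ) 1 : ℕ →₀ ℕ) i =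
      {v | (κ v : ℕ) = i}.ncard := by
    intro κ i
    rw [Finsupp.finsetSum_apply, Set.ncard_eq_toFinset_card']
    simp [Finsupp.single_apply]
  have hc : ∀ κ : V → S, MvPowerSeries.coeff d
      (if Q κ then ∏ v, (MvPowerSeries.X (κ v : ℕ) : SymF) else 0) =
      if Q κ ∧ ∀ i, {v | (κ v : ℕ) = i}.ncard = d i then 1 else 0 := by
    intro κ
    by_cases h : Q κ
    · rw [if_pos h, prod_X_eq univ (fun v => (κ v : ℕ)), MvPowerSeries.coeff_monomial]
      refine if_congr ?_ rfl rfl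
      rw [Finsupp.ext_iff]
      simp only [hval, h, true_and, eq_comm]
    · simp [h]
  simp only [hc]
  rw [sum_boole]
  change (if d.support ⊆ S then
    (({κ : V → ℕ | (∀ v w, G.Adj v w → κ v ≠ κ w) ∧
        ∀ i : ℕ, {v | κ v = i}.ncard = d i}).ncard : ℚ) else 0) = _
  split_ifs with hd
  · congr 1
    rw [← Set.ncard_coe_finset, ← Set.ncard_image_of_injective (f := fun (κ : V → S) v => (κ v : ℕ))
      _ (fun a b h => funext fun v => Subtype.ext (congrFun h v))]
    congr 1
    ext κ
    simp only [Set.mem_ofPred_eq, Set.mem_image, coe_filter, mem_univ, true_and]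
    constructor
    · rintro ⟨h1, h2⟩
      have hS : ∀ v, κ v ∈ S := by
        intro v
        apply hd
        rw [Finsupp.mem_support_iff, ← h2, ← Nat.pos_iff_ne_zero,
          Set.ncard_pos (Set.toFinite _)]
        exact ⟨v, rfl⟩
      exact ⟨fun v => ⟨κ v, hS v⟩, ⟨(hQ _).2 fun v w h h' => h1 v w h (congrArg Subtype.val h'), h2⟩, rfl⟩
    · rintro ⟨κ, ⟨h1, h2⟩, rfl⟩
      exact ⟨fun v w h h' => (hQ κ).1 h1 v w h (Subtype.ext h'), h2⟩
  · symm
    rw [Nat.cast_eq_zero, card_eq_zero, filter_eq_empty_iff]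
    rintro κ - ⟨-, h⟩
    apply hd
    intro i hi
    rw [Finsupp.mem_support_iff, ← h, ← Nat.pos_iff_ne_zero,
      Set.ncard_pos (Set.toFinite _)] at hi
    obtain ⟨v, rfl⟩ := hi
    exact (κ v).2

end Trunc

/-! ### Generating functions -/

section GenFun

open PowerSeries
variable {R : Type*} [CommRing R]

/-- The operator `E ↦ z E'` on power series in `z`. -/
noncomputable def zDer (E : R⟦X⟧) : R⟦X⟧ := X * d⁄dX R E

/-- The operator `E ↦ z² E''` on power series in `z`. -/
noncomputable def zzDer (E : R⟦X⟧) : R⟦X⟧ := X ^ 2 * d⁄dX R (d⁄dX R E)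

lemma coeff_zDer (E : R⟦X⟧) (n : ℕ) : coeff n (zDer E) = (n : R) * coeff n E := by
  unfold zDer
  cases n with
  | zero => simp
  | succ n => rw [coeff_succ_X_mul, coeff_derivative]; push_cast; ring

lemma coeff_zzDer (E : R⟦X⟧) (n : ℕ) :
    coeff n (zzDer E) = (n : R) * ((n - 1 : ℕ) : R) * coeff n E := by
  unfold zzDer
  rw [pow_two, mul_assoc]
  match n with
  | 0 => simp
  | 1 => rw [coeff_succ_X_mul]; simp
  | n + 2 =>
    rw [coeff_succ_X_mul, coeff_succ_X_mul, coeff_derivative, coeff_derivative]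
    push_cast [Nat.add_sub_cancel]; ring

/-- The sum of `∏ (i_j - 1) e_{i_j}` over all compositions of `n`. -/
noncomputable def tailSum (e : ℕ → R) (n : ℕ) : R :=
  ∑ l ∈ compLists n, ((l.map (· - 1)).prod : ℕ) * (l.map e).prod

lemma tailSum_zero (e : ℕ → R) : tailSum e 0 = 1 := by
  simp [tailSum, sum_compLists_zero]

lemma tailSum_succ (e : ℕ → R) (n : ℕ) :
    tailSum e (n + 1) = ∑ k ∈ range (n + 1), (k : R) * e (k + 1) * tailSum e (n - k) := by
  unfold tailSum
  rw [sum_compLists_succ]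
  refine sum_congr rfl fun k _ => ?_
  rw [mul_sum]
  refine sum_congr rfl fun t _ => ?_
  simp only [List.map_cons, List.prod_cons, Nat.add_sub_cancel]
  push_cast; ring

lemma pathExpansion_succ (e : ℕ → R) (n : ℕ) :
    ∑ l ∈ compLists (n + 1), (wC l : R) * (l.map e).prod =
      ∑ k ∈ range (n + 1), ((k + 1 : ℕ) : R) * e (k + 1) * tailSum e (n - k) := by
  rw [sum_compLists_succ]
  refine sum_congr rfl fun k _ => ?_
  rw [tailSum, mul_sum]
  refine sum_congr rfl fun t _ => ?_
  simp only [List.map_cons, List.prod_cons, wC]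
  push_cast; ring

lemma cycleExpansion_succ (e : ℕ → R) (n : ℕ) :
    ∑ l ∈ compLists (n + 1), (((l.headI - 1) * wC l : ℕ) : R) * (l.map e).prod =
      ∑ k ∈ range (n + 1), ((k + 1 : ℕ) : R) * (k : R) * e (k + 1) * tailSum e (n - k) := by
  rw [sum_compLists_succ]
  refine sum_congr rfl fun k _ => ?_
  rw [tailSum, mul_sum]
  refine sum_congr rfl fun t _ => ?_
  simp only [List.map_cons, List.prod_cons, wC, List.headI, Nat.add_sub_cancel]
  push_cast; ring

lemma coeff_succ_mul_of_zero (f g : R⟦X⟧) (hf : coeff 0 f = 0) (n : ℕ) :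
    coeff (n + 1) (f * g) = ∑ k ∈ range (n + 1), coeff (k + 1) f * coeff (n - k) g := by
  rw [coeff_mul, Finset.Nat.sum_antidiagonal_eq_sum_range_succ
    (f := fun i j => coeff i f * coeff j g), Finset.sum_range_succ', hf, zero_mul, add_zero]
  refine sum_congr rfl fun k _ => ?_
  rw [Nat.add_sub_add_right]

/-- As `E - z E' = 1 - ∑ (k - 1) e_k z^k`, its inverse is the geometric series that enumerates
compositions with weight `∏ (i_j - 1) e_{i_j}`. -/
lemma tailSeries_eq (E : R⟦X⟧) (h0 : coeff 0 E = 1) :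
    PowerSeries.mk (tailSum fun k => coeff k E) * (E - zDer E) = 1 := by
  have hc : coeff 0 (1 - E + zDer E) = 0 := by
    rw [map_add, map_sub, coeff_zDer, h0, coeff_zero_one]; simp
  have h : PowerSeries.mk (tailSum fun k => coeff k E) =
      1 + (1 - E + zDer E) * PowerSeries.mk (tailSum fun k => coeff k E) := by
    ext n
    cases n with
    | zero =>
      rw [coeff_zero_eq_constantCoeff_apply] at hc
      simp [tailSum_zero, hc]
    | succ n =>
      rw [map_add, coeff_succ_mul_of_zero _ _ hc]
      simp only [coeff_mk, tailSum_succ, map_add, map_sub, coeff_zDer, coeff_one]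
      rw [if_neg (by omega), zero_add]
      refine sum_congr rfl fun k _ => ?_
      rw [if_neg (by omega)]
      push_cast; ring
  linear_combination h

lemma coeff_prod_one_add {ι : Type*} [Fintype ι] (x : ι → R) (k : ℕ) :
    coeff k (∏ i, (1 + C (x i) * X) : R⟦X⟧) =
      ∑ t ∈ powersetCard k univ, ∏ i ∈ t, x i := by
  rw [prod_one_add, map_sum, ← Finset.sum_filter_add_sum_filter_not _ (fun t => t.card = k)]
  have h : ∀ t : Finset ι, coeff k (∏ i ∈ t, (C (x i) * X : R⟦X⟧)) =
      if k = t.card then ∏ i ∈ t, x i else 0 := by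
    intro t
    rw [prod_mul_distrib, prod_const, ← map_prod, coeff_C_mul, coeff_X_pow]
    simp
  simp only [h]
  rw [← powersetCard_eq_filter, add_eq_left.2]
  · refine sum_congr rfl fun t ht => ?_
    rw [mem_powersetCard] at ht
    rw [if_pos ht.2.symm]
  · refine sum_eq_zero fun t ht => ?_
    rw [mem_filter] at ht
    exact if_neg fun h => ht.2 h.symm

/-- For `E = ∏ (1 + x_c z)`, the generating functions `P` of Carlitz words (empty word included)
and `C` of closed Carlitz words satisfy `P (E - z E') = E` and `C (E - z E') = z² E''`. -/
lemma genFun_identities {ι : Type*} [Fintype ι] [DecidableEq ι] (x : ι → R) (E : R⟦X⟧)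
    (hE : E = ∏ i, (1 + C (x i) * X)) :
    (1 + X * PowerSeries.mk (pathSum x)) * (E - zDer E) = E ∧
      X * PowerSeries.mk (cycleSum x) * (E - zDer E) = zzDer E := by
  have hu : ∀ c, ∃ v : R⟦X⟧, (1 + C (x c) * X) * v = 1 := fun c => by
    apply IsUnit.exists_right_inv
    rw [PowerSeries.isUnit_iff_constantCoeff]
    simp
  -- `v c` is the inverse of `1 + x_c z`; everything is expressed through `v`, with
  -- `T` the logarithmic derivative of `E` and `T' = -T2`.
  choose v hv using hu
  set P : R⟦X⟧ := 1 + X * PowerSeries.mk (pathSum x) with hP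
  set T : R⟦X⟧ := ∑ c, C (x c) * v c with hT
  set T2 : R⟦X⟧ := ∑ c, (C (x c) * v c) ^ 2 with hT2
  have hdv : ∀ c, d⁄dX R (v c) = - (C (x c) * v c ^ 2) := by
    intro c
    have h := congrArg (d⁄dX R) (hv c)
    simp only [Derivation.leibniz, map_add, smul_eq_mul, derivative_C, derivative_X,
      Derivation.map_one_eq_zero] at h
    linear_combination (v c) * h - (d⁄dX R (v c)) * hv c
  have hdT : d⁄dX R T = -T2 := by
    rw [hT, hT2, map_sum, ← sum_neg_distrib]
    refine sum_congr rfl fun c _ => ?_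
    simp only [Derivation.leibniz, smul_eq_mul, derivative_C, hdv]
    ring
  have hdE : d⁄dX R E = E * T := by
    have : ∀ s : Finset ι, d⁄dX R (∏ i ∈ s, (1 + C (x i) * X) : R⟦X⟧) =
        (∏ i ∈ s, (1 + C (x i) * X)) * ∑ c ∈ s, C (x c) * v c := by
      intro s
      induction s using Finset.induction_on with
      | empty => simp
      | insert a s ha ih =>
        rw [prod_insert ha, sum_insert ha, Derivation.leibniz, ih]
        simp only [Derivation.leibniz, map_add, smul_eq_mul, derivative_C, derivative_X,
          Derivation.map_one_eq_zero]
        linear_combination (-(C (x a) * ∏ i ∈ s, (1 + C (x i) * X))) * hv a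
    rw [hE, this]
  have hddE : d⁄dX R (d⁄dX R E) = E * (T ^ 2 - T2) := by
    rw [hdE, Derivation.leibniz, hdE, hdT]
    simp only [smul_eq_mul]
    ring
  have hF : ∀ c, X * PowerSeries.mk (fun n => pathFrom x n c) = C (x c) * X * v c * P := by
    intro c
    have h1 : PowerSeries.mk (fun n => pathFrom x n c) =
        C (x c) * (P - X * PowerSeries.mk (fun n => pathFrom x n c)) := by
      ext n
      rw [coeff_C_mul, hP]
      cases n with
      | zero => simp [pathFrom_zero]
      | succ n =>
        rw [map_sub, map_add, coeff_succ_X_mul, coeff_succ_X_mul]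
        simp [pathFrom_succ, coeff_one]
    linear_combination X * v c * h1 - X * PowerSeries.mk (fun n => pathFrom x n c) * hv c
  have hH : ∀ c, X * PowerSeries.mk (fun n => cycleFrom x n c) =
      C (x c) * X * v c ^ 2 * P - C (x c) * X * v c := by
    intro c
    have h1 : PowerSeries.mk (fun n => cycleFrom x n c) =
        PowerSeries.mk (fun n => pathFrom x n c) - C (x c) -
          C (x c) * (X * PowerSeries.mk (fun n => cycleFrom x n c)) := by
      ext n
      rw [map_sub, map_sub, coeff_C_mul]
      cases n with
      | zero => simp [pathFrom_zero, cycleFrom_zero]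
      | succ n =>
        rw [coeff_succ_X_mul]
        simp [cycleFrom_succ]
    linear_combination X * v c * h1 + v c * hF c - X * PowerSeries.mk (fun n => cycleFrom x n c) * hv c
  have hPT : P = 1 + X * T * P := by
    have h1 : X * PowerSeries.mk (pathSum x) = ∑ c, X * PowerSeries.mk (fun n => pathFrom x n c) := by
      rw [← mul_sum]
      congr 1
      ext n
      simp [← sum_pathFrom]
    have h2 : X * PowerSeries.mk (pathSum x) = X * T * P := by
      rw [h1, hT, mul_sum, sum_mul]
      exact sum_congr rfl fun c _ => by rw [hF c]; ring
    linear_combination hP + h2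
  have hC : X * PowerSeries.mk (cycleSum x) = X * (T - X * T2) * P - X * T := by
    have h1 : X * PowerSeries.mk (cycleSum x) = ∑ c, X * PowerSeries.mk (fun n => cycleFrom x n c) := by
      rw [← mul_sum]
      congr 1
      ext n
      simp [← sum_cycleFrom]
    rw [h1, hT, hT2, mul_sum, ← sum_sub_distrib, mul_sum, mul_sum, sum_mul, ← sum_sub_distrib]
    refine sum_congr rfl fun c _ => ?_
    rw [hH c]
    linear_combination (C (x c) * X * v c * P) * hv c
  unfold zDer zzDer
  rw [hddE, hdE]
  constructor
  · linear_combination E * hPT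
  · rw [hC]
    linear_combination X * (T - X * T2) * E * hPT

/-- The expansions of the path and cycle enumerators in elementary symmetric polynomials. -/
lemma pathSum_and_cycleSum_eq {ι : Type*} [Fintype ι] [DecidableEq ι] (x : ι → R) (n : ℕ) (e : ℕ → R)
    (he : ∀ k, e k = ∑ t ∈ powersetCard k univ, ∏ i ∈ t, x i) :
    pathSum x n = ∑ l ∈ compLists (n + 1), (wC l : R) * (l.map e).prod ∧
    cycleSum x n = ∑ l ∈ compLists (n + 1),
      (((l.headI - 1) * wC l : ℕ) : R) * (l.map e).prod := by
  set E : R⟦X⟧ := ∏ i, (1 + C (x i) * X) with hE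
  obtain rfl : e = fun k => coeff k E := by
    funext k
    rw [he, hE, coeff_prod_one_add]
  have h0 : coeff 0 E = 1 := by rw [hE, coeff_prod_one_add]; simp
  obtain ⟨h1, h2⟩ := genFun_identities x E hE
  have hB := tailSeries_eq E h0
  set B := PowerSeries.mk (tailSum fun k => coeff k E) with hBdef
  have hA : X * PowerSeries.mk (pathSum x) = zDer E * B := by
    linear_combination (-(1 + X * PowerSeries.mk (pathSum x))) * hB + B * h1 + hB
  have hC : X * PowerSeries.mk (cycleSum x) = zzDer E * B := by
    linear_combination (-(X * PowerSeries.mk (cycleSum x))) * hB + B * h2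
  rw [pathExpansion_succ, cycleExpansion_succ]
  constructor
  · have h := congrArg (coeff (n + 1)) hA
    rw [coeff_succ_X_mul, coeff_succ_mul_of_zero _ _ (by simp [coeff_zDer])] at h
    simpa [coeff_zDer, hBdef] using h
  · have h := congrArg (coeff (n + 1)) hC
    rw [coeff_succ_X_mul, coeff_succ_mul_of_zero _ _ (by simp [coeff_zzDer])] at h
    simpa [coeff_zzDer, hBdef] using h

end GenFun

/-! ### Chromatic symmetric functions of paths and cycles -/

section Chromatic

lemma path_proper_iff {ι : Type*} {n : ℕ} (κ : Fin (n + 1) → ι) :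
    Carlitz κ ↔ ∀ v w, (pathG (n + 1)).Adj v w → κ v ≠ κ w := by
  simp only [pathG, SimpleGraph.fromRel_adj]
  constructor
  · have key : ∀ v w : Fin (n + 1), Carlitz κ → (v : ℕ) + 1 = w → κ v ≠ κ w := by
      intro v w h hvw
      have hw : (⟨v, by omega⟩ : Fin n).succ = w := Fin.ext hvw
      rw [← hw]
      exact h ⟨v, by omega⟩
    rintro h v w ⟨-, hvw | hvw⟩
    · exact key v w h hvw
    · exact (key w v h hvw).symm
  · intro h i
    exact h _ _ ⟨Fin.castSucc_lt_succ.ne, Or.inl (by simp)⟩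

lemma cycle_proper_iff {ι : Type*} {n : ℕ} (κ : Fin (n + 2) → ι) :
    (Carlitz κ ∧ κ (Fin.last (n + 1)) ≠ κ 0) ↔
      ∀ v w, (cycleG (n + 2)).Adj v w → κ v ≠ κ w := by
  rw [path_proper_iff]
  simp only [pathG, cycleG, SimpleGraph.fromRel_adj]
  constructor
  · rintro ⟨h, h'⟩ v w ⟨hne, (hvw | ⟨hv, hw⟩) | (hvw | ⟨hw, hv⟩)⟩
    · exact h v w ⟨hne, Or.inl hvw⟩
    · obtain rfl : v = 0 := Fin.ext hv
      obtain rfl : w = Fin.last (n + 1) := Fin.ext hw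
      exact h'.symm
    · exact h v w ⟨hne, Or.inr hvw⟩
    · obtain rfl : w = 0 := Fin.ext hw
      obtain rfl : v = Fin.last (n + 1) := Fin.ext hv
      exact h'
  · intro h
    refine ⟨fun v w hvw => h v w ⟨hvw.1, hvw.2.imp Or.inl Or.inl⟩, h _ _ ⟨?_, ?_⟩⟩
    · exact (Fin.last_pos (n := n)).ne'
    · exact Or.inr (Or.inr ⟨rfl, rfl⟩)

lemma trunc_esymm_subtype (S : Finset ℕ) (k : ℕ) :
    trunc S (esymm k) =
      ∑ t ∈ powersetCard k (univ : Finset S), ∏ i ∈ t, (MvPowerSeries.X (i : ℕ) : SymF) := by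
  rw [trunc_esymm]
  conv_lhs => rw [← attach_map_val (s := S), powersetCard_map, sum_map]
  simp [univ_eq_attach]

lemma trunc_expansion (S : Finset ℕ) (n : ℕ) (f : List ℕ → ℕ) :
    trunc S (∑ l ∈ compLists n, (f l : SymF) * esymmProd l) =
      ∑ l ∈ compLists n, (f l : SymF) * (l.map fun k => trunc S (esymm k)).prod := by
  simp [esymmProd, map_sum, map_list_prod, Function.comp_def]

/-- `X_{P_n} = ∑_{I ⊨ n} w_I e_I`. -/
lemma csf_path {n : ℕ} (hn : 1 ≤ n) :
    csf (pathG n) = ∑ l ∈ compLists n, (wC l : SymF) * esymmProd l := by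
  obtain ⟨n, rfl⟩ := Nat.exists_eq_add_of_le' hn
  refine eq_of_trunc fun S => ?_
  rw [trunc_expansion, trunc_csf S _ Carlitz path_proper_iff]
  exact (pathSum_and_cycleSum_eq (fun i : S => (MvPowerSeries.X (i : ℕ) : SymF)) n _
    (trunc_esymm_subtype S)).1

/-- `X_{C_m} = ∑_{J ⊨ m} (j_1 - 1) w_J e_J`. -/
lemma csf_cycle {m : ℕ} (hm : 2 ≤ m) :
    csf (cycleG m) =
      ∑ l ∈ compLists m, (((l.headI - 1) * wC l : ℕ) : SymF) * esymmProd l := by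
  obtain ⟨n, rfl⟩ := Nat.exists_eq_add_of_le' hm
  refine eq_of_trunc fun S => ?_
  rw [trunc_expansion S (n + 2) fun l => (l.headI - 1) * wC l,
    trunc_csf S _ (fun κ => Carlitz κ ∧ κ (Fin.last (n + 1)) ≠ κ 0) cycle_proper_iff]
  exact (pathSum_and_cycleSum_eq (fun i : S => (MvPowerSeries.X (i : ℕ) : SymF)) (n + 1) _
    (trunc_esymm_subtype S)).2

/-- `j_1 w_{IJ} = w_I · (j_1 - 1) w_J`: in `w_{IJ}` the first part of `J` contributes `j_1 - 1`
instead of `j_1`. -/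
lemma wC_append {I J : List ℕ} (hI : I ≠ []) (hJ : J ≠ []) :
    J.headI * wC (I ++ J) = wC I * ((J.headI - 1) * wC J) := by
  obtain ⟨a, s, rfl⟩ := List.exists_cons_of_ne_nil hI
  obtain ⟨b, t, rfl⟩ := List.exists_cons_of_ne_nil hJ
  simp only [wC, List.cons_append, List.map_append, List.map_cons, List.prod_append,
    List.prod_cons, List.headI]
  ring

lemma ne_nil_of_mem_compLists {n : ℕ} (hn : 1 ≤ n) {l : List ℕ} (h : l ∈ compLists n) :
    l ≠ [] := by
  rintro rfl
  have := (mem_compLists.1 h).1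
  simp at this
  omega

lemma csf_path_mul_cycle {l m : ℕ} (hl : 1 ≤ l) (hm : 2 ≤ m) :
    csf (pathG l) * csf (cycleG m) =
      ∑ I ∈ compLists l, ∑ J ∈ compLists m,
        ((J.headI * wC (I ++ J) : ℕ) : ℚ) • esymmProd (I ++ J) := by
  rw [csf_path hl, csf_cycle hm, sum_mul_sum]
  refine sum_congr rfl fun I hI => sum_congr rfl fun J hJ => ?_
  rw [wC_append (ne_nil_of_mem_compLists hl hI) (ne_nil_of_mem_compLists (by omega) hJ),
    Nat.cast_smul_eq_nsmul, nsmul_eq_mul]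
  simp only [esymmProd, List.map_append, List.prod_append]
  push_cast
  ring

end Chromatic

/-- For `l ≥ 1` and `m ≥ 2`,
`X_{P_l} X_{C_m} = Σ_{I ⊨ l, J ⊨ m} j_1 w_{IJ} e_{IJ}
 = Σ_{K ⊨ l+m, Θ_K^+(l) = 0} (Θ_K^+(l+1) + 1) w_K e_K`. -/
theorem stmt_3 (l m : ℕ) (hl : 1 ≤ l) (hm : 2 ≤ m) :
    (csf (pathG l) * csf (cycleG m) =
      ∑ I : Composition l, ∑ J : Composition m,
        ((J.blocks.headI * wC (I.blocks ++ J.blocks) : ℕ) : ℚ) •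
          esymmProd (I.blocks ++ J.blocks)) ∧
    (csf (pathG l) * csf (cycleG m) =
      ∑ K : Composition (l + m),
        if thetaPlus K.blocks l = 0 then
          (((thetaPlus K.blocks (l + 1) + 1) * wC K.blocks : ℕ) : ℚ) • esymmProd K.blocks
        else 0) := by
  have h := csf_path_mul_cycle hl hm
  constructor
  · rw [h, ← sum_composition]
    refine sum_congr rfl fun I _ => ?_
    rw [← sum_composition]
  · rw [h, sum_append_eq (by omega) fun j K => ((j * wC K : ℕ) : ℚ) • esymmProd K,
      ← sum_composition]
end

section
/- For integers n and l with 0 ≤ l ≤ n − 2, Σ_{k=0}^{l} X_{P_k} · X_{C_{n−k}} = Σ_{I ⊨ n} (σ_I^+(l+1) − 1) · w_I · e_I, where X_{P_0} = 1. -/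
/-! The generating functions of paths and cycles, with colors in a finite set, are
`P(z) = E / (E - zE')` and `C(z) = z²E'' / (E - zE')`, where `E(z) = ∏ (1 + x_i z)`. Both come from
the transfer recursion for words without equal adjacent letters, solved with the help of the series
`u_i = x_i z / (1 + x_i z)`: since `Σ u_i = zE'/E`, one finds `P = 1 / (1 - Σ u_i)` and
`C = ((Σ u_i)² - Σ u_i²) / (1 - Σ u_i)` (lemma `walk_series`).

Expanding `1 / (E - zE') = 1 / (1 - Σ_{k ≥ 2} (k-1) e_k z^k)` over compositions gives
`X_{P_n} = Σ_I w_I e_I` and `X_{C_n} = Σ_I (i_1 - 1) w_I e_I` (`comp_series`, `pathSum_eq`,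
`cycSum_eq`).

The case `l = 0` of the theorem is the cycle formula, because `σ_I^+(1) = i_1`. Raising `l - 1` to
`l` changes `σ_I^+(l+1)` only if `l` is a prefix sum of `I`; cutting `I = JK` there, the increment is
the first part `k_1` of `K`, and `k_1 w_{JK} = w_J (k_1 - 1) w_K`. So the right side grows by
`X_{P_l} X_{C_{n-l}}`, as the left side does (`increment_aux`, `sum_compSum_mul_cSum`).

The coefficient of a monomial involves only the finitely many variables occurring in it, so the
identity of formal power series follows from the identities in finitely many colors (`Agree`). -/

open Finset

namespace PathCycle

/-! ### Weighted walks and their generating functions -/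

section Walks

variable {R : Type*} [CommRing R] {ι : Type*} [Fintype ι] [DecidableEq ι]

/-- The sum of `x_{κ 0} ⋯ x_{κ n}` over all words `κ 0, …, κ n` from `i` to `j` without equal
adjacent letters, computed by removing the first letter. -/
def walk (x : ι → R) : ℕ → ι → ι → R
  | 0, i, j => if i = j then x i else 0
  | n + 1, i, j => x i * ∑ k, if i ≠ k then walk x n k j else 0

/-- The chromatic polynomial of the path `P_n`, with colors in `ι`, in terms of walks. -/
def pathSum (x : ι → R) : ℕ → R
  | 0 => 1
  | n + 1 => ∑ i, ∑ j, walk x n i j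

/-- The chromatic polynomial of the cycle `C_n` (for `n ≥ 2`), with colors in `ι`: walks whose two
ends differ. The values at `n = 0` and `n = 1` are `0`. -/
def cycSum (x : ι → R) : ℕ → R
  | 0 => 0
  | n + 1 => ∑ i, ∑ j, if i ≠ j then walk x n i j else 0

open PowerSeries in
/-- The generating function `E(z) = ∏ (1 + x_i z)` of the elementary symmetric polynomials. -/
noncomputable def eSer (x : ι → R) : PowerSeries R := ∏ i, (1 + X * C (x i))

/-- The Euler operator `z d/dz`, multiplying the coefficient of `z^n` by `n`. -/
noncomputable def theta (f : PowerSeries R) : PowerSeries R :=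
  PowerSeries.X * PowerSeries.derivative R f

lemma theta_mul (f g : PowerSeries R) : theta (f * g) = theta f * g + f * theta g := by
  simp only [theta, Derivation.leibniz, smul_eq_mul]; ring

lemma theta_add (f g : PowerSeries R) : theta (f + g) = theta f + theta g := by
  simp only [theta, map_add]; ring

lemma theta_sum {α : Type*} (s : Finset α) (f : α → PowerSeries R) :
    theta (∑ i ∈ s, f i) = ∑ i ∈ s, theta (f i) := by
  simp only [theta, map_sum, Finset.mul_sum]

@[simp] lemma constantCoeff_theta (f : PowerSeries R) :
    PowerSeries.constantCoeff (theta f) = 0 := by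
  simp [theta]

lemma coeff_theta (f : PowerSeries R) (n : ℕ) :
    PowerSeries.coeff n (theta f) = n * PowerSeries.coeff n f := by
  cases n with
  | zero => simp [theta]
  | succ n => simp [theta, PowerSeries.coeff_succ_X_mul, PowerSeries.coeff_derivative, mul_comm]

open PowerSeries in
/-- The series `u_i = x_i z / (1 + x_i z)`, whose sum over `i` is the logarithmic derivative
`θE / E`. -/
lemma exists_u (x : ι → R) : ∃ u : ι → PowerSeries R,
    (∀ i, (1 + X * C (x i)) * u i = X * C (x i)) ∧
    (∀ i, (1 + X * C (x i)) * (1 - u i) = 1) ∧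
    (∀ i, theta (u i) = u i - u i ^ 2) ∧
    theta (eSer x) = eSer x * ∑ i, u i := by
  have hv : ∀ i, ∃ v, (1 + X * C (x i)) * v = 1 := fun i => by
    have : IsUnit (1 + X * C (x i)) := by
      rw [PowerSeries.isUnit_iff_constantCoeff]; simp
    exact this.exists_right_inv
  choose v hv using hv
  have ht : ∀ i, theta (1 + X * C (x i)) = X * C (x i) := fun i => by
    simp [theta, mul_comm]
  have hu : ∀ i, (1 + X * C (x i)) * (X * C (x i) * v i) = X * C (x i) := fun i => by
    linear_combination (X * C (x i)) * hv i
  refine ⟨fun i => X * C (x i) * v i, hu, ?_, ?_, ?_⟩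
  · intro i
    linear_combination -hu i
  · intro i
    have h1 := congrArg theta (hu i)
    have h2 : theta (X * C (x i)) = X * C (x i) := by simp [theta, mul_comm]
    rw [theta_mul, ht, h2] at h1
    generalize theta (X * C (x i) * v i) = t at *
    linear_combination v i * h1 - (t) * hv i
  · have key : ∀ s : Finset ι, theta (∏ i ∈ s, (1 + X * C (x i))) =
        (∏ i ∈ s, (1 + X * C (x i))) * ∑ i ∈ s, X * C (x i) * v i := by
      intro s
      induction s using Finset.induction_on with
      | empty => simp [theta]
      | insert a s ha ih =>
        rw [Finset.prod_insert ha, Finset.sum_insert ha, theta_mul, ih, ht]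
        linear_combination -(∏ i ∈ s, (1 + X * C (x i))) * hu a
    exact key _

open PowerSeries in
/-- The transfer recursion for walks, solved for generating functions: it gives
`P = E / (E - zE')` for paths and `z²E'' / (E - zE')` for cycles, where `z²E'' = θθE - θE`. -/
lemma walk_series (x : ι → R) :
    PowerSeries.mk (pathSum x) * (eSer x - theta (eSer x)) = eSer x ∧
    PowerSeries.mk (cycSum x) * (eSer x - theta (eSer x)) =
      theta (theta (eSer x)) - theta (eSer x) := by
  obtain ⟨u, hu, hv, ht, hE⟩ := exists_u x
  set U := ∑ i, u i with hU
  let G : ι → ι → PowerSeries R := fun i j => X * PowerSeries.mk fun n => walk x n i j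
  let H : ι → PowerSeries R := fun j => ∑ i, G i j
  have hG0 : ∀ i j, G i j = X * C (x i) * ((if i = j then 1 else 0) + (H j - G i j)) := by
    intro i j
    have : H j - G i j = ∑ k, if i ≠ k then G k j else 0 := by
      simp only [H]
      rw [sub_eq_iff_eq_add, ← Finset.sum_erase_add _ _ (Finset.mem_univ i),
        ← Finset.sum_erase_add (a := i) _ _ (Finset.mem_univ i)]
      simp only [ne_eq, not_true_eq_false, if_false, add_zero]
      congr 1
      refine Finset.sum_congr rfl fun k hk => ?_
      rw [if_pos (Finset.ne_of_mem_erase hk).symm]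
    rw [this, mul_assoc]
    simp only [G]
    congr 1
    ext n
    rw [PowerSeries.coeff_C_mul]
    cases n with
    | zero =>
      by_cases h : i = j <;> simp [walk, h, apply_ite, Finset.sum_ite]
    | succ n =>
      have h0 : coeff (n + 1) (if i = j then (1 : PowerSeries R) else 0) = 0 := by
        split_ifs <;> simp [PowerSeries.coeff_one]
      rw [map_add, h0, zero_add, map_sum, coeff_mk, walk]
      congr 1
      refine Finset.sum_congr rfl fun k _ => ?_
      split_ifs
      · rw [PowerSeries.coeff_succ_X_mul, coeff_mk]
      · simp
  have hG : ∀ i j, G i j = u i * ((if i = j then 1 else 0) + H j) := by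
    intro i j
    have h1 := hG0 i j
    generalize (if i = j then (1 : PowerSeries R) else 0) = δ at *
    linear_combination (1 - u i) * h1 - G i j * hv i - (δ + H j) * hu i
  have hH : ∀ j, (1 - U) * H j = u j := by
    intro j
    have : H j = u j + U * H j := by
      have h1 : H j = ∑ i, u i * ((if i = j then 1 else 0) + H j) :=
        Finset.sum_congr rfl fun i _ => hG i j
      refine h1.trans ?_
      generalize H j = h
      simp [mul_add, Finset.sum_add_distrib, ← Finset.sum_mul, hU]
    linear_combination this
  have hP : PowerSeries.mk (pathSum x) = 1 + ∑ j, H j := by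
    ext n
    cases n with
    | zero => simp [pathSum, H, G]
    | succ n =>
      simp only [coeff_mk, pathSum, H, G, map_add, map_sum, PowerSeries.coeff_succ_X_mul,
        PowerSeries.coeff_one, Nat.add_eq_zero_iff, one_ne_zero, and_false, if_false, zero_add]
      exact Finset.sum_comm
  have hC : PowerSeries.mk (cycSum x) = ∑ j, (H j - G j j) := by
    ext n
    cases n with
    | zero => simp [cycSum, H, G]
    | succ n =>
      simp only [coeff_mk, cycSum, H, G, map_sub, map_sum, PowerSeries.coeff_succ_X_mul]
      rw [Finset.sum_comm]
      refine Finset.sum_congr rfl fun j _ => ?_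
      rw [eq_sub_iff_add_eq, ← Finset.sum_erase_add _ _ (Finset.mem_univ j),
        ← Finset.sum_erase_add (a := j) _ _ (Finset.mem_univ j)]
      simp only [ne_eq, not_true_eq_false, if_false, add_zero]
      congr 1
      refine Finset.sum_congr rfl fun k hk => ?_
      rw [if_pos (Finset.ne_of_mem_erase hk)]
  have hD : eSer x - theta (eSer x) = eSer x * (1 - U) := by rw [hE]; ring
  have hθU : theta U = U - ∑ i, u i ^ 2 := by
    rw [hU, theta_sum, ← Finset.sum_sub_distrib]; exact Finset.sum_congr rfl fun i _ => ht i
  constructor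
  · have : (1 - U) * ∑ j, H j = U := by rw [Finset.mul_sum]; simp only [hH]; rfl
    rw [hD, hP]; linear_combination eSer x * this
  · have : (1 - U) * ∑ j, (H j - G j j) = U ^ 2 - ∑ i, u i ^ 2 := by
      have h1 : ∀ j, (1 - U) * (H j - G j j) = u j * U - u j ^ 2 := fun j => by
        have := hG j j
        rw [if_pos rfl] at this
        linear_combination (1 - u j) * hH j - (1 - U) * this
      rw [Finset.mul_sum]; simp only [h1, Finset.sum_sub_distrib, ← Finset.sum_mul]
      rw [← hU]; ring
    rw [hD, hC, hE, theta_mul, hE, hθU]; linear_combination eSer x * this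

end Walks

/-! ### The statistic `σ_I^+` under removal of the first part -/

lemma sigmaPlus_zero (I : List ℕ) : sigmaPlus I 0 = 0 :=
  Nat.le_zero.mp (Nat.sInf_le ⟨⟨0, by simp⟩, le_rfl⟩)

lemma sigmaPlus_cons_le {k a : ℕ} (J : List ℕ) (ha : 1 ≤ a) (hk : a ≤ k) :
    sigmaPlus (k :: J) a = k := by
  apply le_antisymm
  · exact Nat.sInf_le ⟨⟨1, by simp, by simp⟩, hk⟩
  · refine le_csInf ⟨k, ⟨1, by simp, by simp⟩, hk⟩ ?_
    rintro m ⟨⟨r, hr, rfl⟩, hm⟩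
    cases r with
    | zero => simp at hm; omega
    | succ r => simp

lemma sigmaPlus_cons_gt {k a : ℕ} (J : List ℕ) (hk : k < a) (ha : a ≤ k + J.sum) :
    sigmaPlus (k :: J) a = k + sigmaPlus J (a - k) := by
  have hne : {m | (∃ r ≤ J.length, (J.take r).sum = m) ∧ a - k ≤ m}.Nonempty :=
    ⟨J.sum, ⟨J.length, le_rfl, by simp⟩, by omega⟩
  apply le_antisymm
  · obtain ⟨⟨r, hr, h1⟩, h2⟩ := Nat.sInf_mem hne
    refine Nat.sInf_le ⟨⟨r + 1, by simpa using hr, ?_⟩, ?_⟩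
    · rw [List.take_succ_cons, List.sum_cons, h1]; rfl
    · have : a - k ≤ sigmaPlus J (a - k) := h2
      omega
  · refine le_csInf ⟨k + J.sum, ⟨J.length + 1, by simp, by simp⟩, ha⟩ ?_
    rintro m ⟨⟨r, hr, rfl⟩, hm⟩
    cases r with
    | zero => simp at hm; omega
    | succ r =>
      rw [List.take_succ_cons, List.sum_cons] at hm ⊢
      have : sigmaPlus J (a - k) ≤ (J.take r).sum :=
        Nat.sInf_le ⟨⟨r, by simpa using hr, rfl⟩, by omega⟩
      omega

/-! ### Weighted sums over compositions -/

section Compositions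

variable {R : Type*} [CommRing R]

/-- The sum of `f I` over all compositions `I` of `n`. -/
def compSum (f : List ℕ → R) (n : ℕ) : R := ∑ I : Composition n, f I.blocks

lemma compSum_congr {f g : List ℕ → R} {n : ℕ}
    (h : ∀ I : List ℕ, (∀ i ∈ I, 0 < i) → I.sum = n → f I = g I) : compSum f n = compSum g n :=
  Finset.sum_congr rfl fun I _ => h _ (fun _ hi => I.blocks_pos hi) I.blocks_sum

lemma compSum_zero (f : List ℕ → R) : compSum f 0 = f [] := by
  have h : ∀ I : Composition 0, I.blocks = [] := fun I => by
    cases hI : I.blocks with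
    | nil => rfl
    | cons a t =>
      have h1 := I.blocks_sum
      have h2 := I.blocks_pos (i := a) (by simp [hI])
      rw [hI, List.sum_cons] at h1; omega
  simp [compSum, h, composition_card]

/-- Splitting off the first part, of size `p.1 + 1`. -/
lemma compSum_succ (f : List ℕ → R) (n : ℕ) :
    compSum f (n + 1) =
      ∑ p ∈ antidiagonal n, compSum (fun J => f ((p.1 + 1) :: J)) p.2 := by
  unfold compSum
  rw [Finset.sum_sigma']
  symm
  refine Finset.sum_bij (fun q hq => ⟨(q.1.1 + 1) :: q.2.blocks, ?_, ?_⟩) ?_ ?_ ?_ ?_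
  · intro i hi
    rcases List.mem_cons.mp hi with h | h
    · omega
    · exact q.2.blocks_pos h
  · have := Finset.HasAntidiagonal.mem_antidiagonal.mp (Finset.mem_sigma.mp hq).1
    rw [List.sum_cons, q.2.blocks_sum]; omega
  · intros; exact Finset.mem_univ _
  · rintro ⟨⟨a, b⟩, J⟩ h1 ⟨⟨a₁, b₁⟩, J₁⟩ h2 h
    simp only [Finset.mem_sigma, Finset.HasAntidiagonal.mem_antidiagonal, Finset.mem_univ, and_true] at h1 h2
    simp only [Composition.mk.injEq, List.cons.injEq] at h
    obtain ⟨h3, h4⟩ := h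
    obtain rfl : a = a₁ := by omega
    obtain rfl : b = b₁ := by omega
    rw [Composition.ext h4]
  · intro I _
    cases hI : I.blocks with
    | nil => have := I.blocks_sum; rw [hI] at this; simp at this
    | cons a t =>
      have h1 := I.blocks_sum
      have h2 := I.blocks_pos (i := a) (by simp [hI])
      rw [hI, List.sum_cons] at h1
      refine ⟨⟨(a - 1, n + 1 - a), ⟨t, fun {i} hi => I.blocks_pos (by simp [hI, hi]), by omega⟩⟩, ?_, ?_⟩
      · simp; omega
      · ext1
        simp only [hI]
        congr 1; omega
  · intros; rfl

lemma compSum_mul_left (c : R) (f : List ℕ → R) (n : ℕ) :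
    compSum (fun J => c * f J) n = c * compSum f n := by
  simp only [compSum, Finset.mul_sum]

/-- The weight `∏_j (i_j - 1) e_{i_j}`, in which the first part is not special. -/
def vWt (e : ℕ → R) (I : List ℕ) : R := (I.map fun j => ((j - 1 : ℕ) : R) * e j).prod

/-- The weight `c(i_1) e_{i_1} ∏_{j ≥ 2} (i_j - 1) e_{i_j}`; the choice `c k = k` gives
`w_I e_I`, and `c k = k - 1` gives `vWt`. -/
def hWt (e c : ℕ → R) : List ℕ → R
  | [] => 1
  | k :: J => c k * e k * vWt e J

lemma hWt_sub_one (e : ℕ → R) : hWt e (fun k => ((k - 1 : ℕ) : R)) = vWt e := by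
  funext I
  cases I <;> simp [hWt, vWt]

/-- The sum of `σ_K(1) ∏_j (k_j - 1) e_{k_j}` over compositions `K` of `n`. As `σ_K(1) = k_1`, the
summand is `(k_1 - 1) w_K e_K` for `n ≥ 1`, and the sum is then the cycle analogue of
`∑ w_K e_K` (see `cycSum_eq`). -/
noncomputable def cSum (e : ℕ → R) (n : ℕ) : R := compSum (fun K => (sigmaPlus K 1 : R) * vWt e K) n

/-- The increment `σ_I(l+1) - σ_I(l)` vanishes unless `l` is a prefix sum of `I`, and then it is
the first part of the remainder. Hence the weighted sum of increments factors, as the product of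
the sum over compositions of `l` and that over compositions of the rest. This is the inductive step,
splitting off the first part, stated for a general weight `c` of that part. -/
lemma increment_aux (e c : ℕ → R) (m l : ℕ)
    (ih : ∀ l' ≤ l, compSum (fun I => ((sigmaPlus I (l' + 1) : R) - sigmaPlus I l') * vWt e I)
      (l' + m + 1) = compSum (vWt e) l' * cSum e (m + 1)) :
    compSum (fun I => ((sigmaPlus I (l + 1 + 1) : R) - sigmaPlus I (l + 1)) * hWt e c I)
      (l + 1 + m + 1) = compSum (hWt e c) (l + 1) * cSum e (m + 1) := by
  rw [compSum_succ, compSum_succ (hWt e c), Finset.sum_mul,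
    Finset.Nat.sum_antidiagonal_eq_sum_range_succ_mk,
    Finset.Nat.sum_antidiagonal_eq_sum_range_succ_mk]
  symm
  refine Finset.sum_subset_zero_on_sdiff (Finset.range_mono (by omega)) ?_ ?_
  · intro k hk
    simp only [Finset.mem_sdiff, Finset.mem_range] at hk
    rw [compSum_congr (g := fun _ => 0)]
    · simp [compSum]
    · intro J _ _
      rw [sigmaPlus_cons_le _ (by omega) (by omega), sigmaPlus_cons_le _ (by omega) (by omega)]
      ring
  · intro k hk
    rw [Finset.mem_range] at hk
    simp only [hWt]
    rw [compSum_mul_left, mul_assoc, ← ih (l - k) (by omega), ← compSum_mul_left]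
    have hn : l + 1 + m - k = l - k + m + 1 := by omega
    rw [hn]
    refine compSum_congr fun J _ hJ => ?_
    have h1 : sigmaPlus ((k + 1) :: J) (l + 1 + 1) = k + 1 + sigmaPlus J (l - k + 1) := by
      rw [sigmaPlus_cons_gt _ (by omega) (by omega)]; congr 2; omega
    have h2 : (sigmaPlus ((k + 1) :: J) (l + 1) : R) = ((k + 1 : ℕ) : R) + sigmaPlus J (l - k) := by
      rcases Nat.lt_or_ge k l with h | h
      · rw [sigmaPlus_cons_gt _ (by omega) (by omega), Nat.cast_add]; congr 3; omega
      · obtain rfl : k = l := by omega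
        rw [sigmaPlus_cons_le _ (by omega) (by omega)]; simp [sigmaPlus_zero]
    rw [h1, h2]; push_cast; ring

lemma increment_v (e : ℕ → R) (m l : ℕ) :
    compSum (fun I => ((sigmaPlus I (l + 1) : R) - sigmaPlus I l) * vWt e I)
      (l + m + 1) = compSum (vWt e) l * cSum e (m + 1) := by
  induction l using Nat.strong_induction_on with
  | _ l ih =>
    cases l with
    | zero => simp [sigmaPlus_zero, compSum_zero, cSum, vWt]
    | succ l =>
      have := increment_aux e (fun k => ((k - 1 : ℕ) : R)) m l fun l' hl => ih l' (by omega)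
      simpa only [hWt_sub_one] using this

/-- The main identity on the composition side, with partial sums telescoping over `l`. -/
lemma sum_compSum_mul_cSum (e : ℕ → R) (n l : ℕ) (h : l + 2 ≤ n) :
    ∑ k ∈ range (l + 1), compSum (hWt e fun k => (k : R)) k * cSum e (n - k) =
      compSum (fun I => ((sigmaPlus I (l + 1) : R) - 1) * hWt e (fun k => (k : R)) I) n := by
  induction l with
  | zero =>
    rw [zero_add, Finset.sum_range_one, compSum_zero, hWt, one_mul, cSum, Nat.sub_zero]
    refine compSum_congr fun I hp hs => ?_
    cases I with
    | nil => simp at hs; omega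
    | cons k J =>
      have hk := hp k (by simp)
      rw [sigmaPlus_cons_le _ le_rfl hk]
      simp only [vWt, List.map_cons, List.prod_cons, hWt]
      push_cast [Nat.cast_sub hk]; ring
  | succ l ih =>
    have h1 := increment_aux e (fun k => (k : R)) (n - (l + 1) - 1) l
      fun l' _ => increment_v e _ l'
    have e1 : l + 1 + (n - (l + 1) - 1) + 1 = n := by omega
    have e2 : n - (l + 1) - 1 + 1 = n - (l + 1) := by omega
    rw [e1, e2] at h1
    rw [Finset.sum_range_succ, ih (by omega), ← h1]
    simp only [compSum, ← Finset.sum_add_distrib]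
    refine Finset.sum_congr rfl fun I _ => ?_
    ring

open PowerSeries in
/-- The generating functions of the composition sums satisfy the same linear equations as those of
walks, when `e` is the coefficient sequence of a series `E` with constant term `1`. -/
lemma comp_series (E : PowerSeries R) (hE : constantCoeff E = 1) :
    PowerSeries.mk (compSum (vWt fun n => coeff n E)) * (E - theta E) = 1 ∧
    PowerSeries.mk (compSum (hWt (fun n => coeff n E) fun k => (k : R))) =
      1 + theta E * PowerSeries.mk (compSum (vWt fun n => coeff n E)) ∧
    ∀ n, cSum (fun n => coeff n E) (n + 1) = coeff (n + 1) ((theta (theta E) - theta E) *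
      PowerSeries.mk (compSum (vWt fun n => coeff n E))) := by
  set e : ℕ → R := fun n => coeff n E with he
  set V := PowerSeries.mk (compSum (vWt e)) with hV
  have hX : ∀ f : PowerSeries R, constantCoeff f = 0 → ∀ n, coeff (n + 1) (f * V) =
      ∑ p ∈ antidiagonal n, coeff (p.1 + 1) f * compSum (vWt e) p.2 := by
    intro f hf n
    rw [PowerSeries.coeff_mul, Finset.Nat.antidiagonal_succ]
    simp [hV, hf]
  refine ⟨?_, ?_, ?_⟩
  · have h1 : V = 1 + (theta E - E + 1) * V := by
      ext n
      cases n with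
      | zero => simp [hV, compSum_zero, vWt, hE]
      | succ n =>
        rw [map_add, hX _ (by simp [hE]), hV, coeff_mk, compSum_succ, PowerSeries.coeff_one,
          if_neg (by omega), zero_add]
        refine Finset.sum_congr rfl fun p _ => ?_
        have h2 : (fun J => vWt e ((p.1 + 1) :: J)) =
            fun J => ((p.1 : R) * e (p.1 + 1)) * vWt e J := by funext J; simp [vWt]
        rw [h2, compSum_mul_left]
        simp only [map_add, map_sub, coeff_theta, PowerSeries.coeff_one, he]
        rw [if_neg (by omega)]; push_cast; ring
    linear_combination h1
  · ext n
    cases n with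
    | zero => simp [compSum_zero, hWt]
    | succ n =>
      rw [map_add, hX _ (by simp), coeff_mk, compSum_succ, PowerSeries.coeff_one,
        if_neg (by omega), zero_add]
      refine Finset.sum_congr rfl fun p _ => ?_
      simp only [hWt]
      rw [compSum_mul_left, coeff_theta]
  · intro n
    rw [hX _ (by simp), cSum, compSum_succ]
    refine Finset.sum_congr rfl fun p _ => ?_
    rw [← compSum_mul_left]
    refine compSum_congr fun J _ _ => ?_
    rw [sigmaPlus_cons_le _ le_rfl (by omega)]
    simp only [vWt, List.map_cons, List.prod_cons, map_sub, coeff_theta, he,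
      Nat.add_sub_cancel]
    push_cast; ring

end Compositions

section Finite

variable {R : Type*} [CommRing R] {ι : Type*} [Fintype ι]

lemma constantCoeff_eSer (x : ι → R) : PowerSeries.constantCoeff (eSer x) = 1 := by
  simp [eSer]

variable [DecidableEq ι]

lemma pathSum_eq (x : ι → R) (n : ℕ) :
    pathSum x n = compSum (hWt (fun n => PowerSeries.coeff n (eSer x)) fun k => (k : R)) n := by
  obtain ⟨h1, h2, -⟩ := comp_series (eSer x) (constantCoeff_eSer x)
  obtain ⟨h3, -⟩ := walk_series x
  rw [← PowerSeries.coeff_mk n (pathSum x), ← PowerSeries.coeff_mk n (compSum _), h2]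
  congr 1
  set V := PowerSeries.mk (compSum (vWt fun n => PowerSeries.coeff n (eSer x)))
  linear_combination V * h3 - (PowerSeries.mk (pathSum x) - 1) * h1

lemma cycSum_eq (x : ι → R) (n : ℕ) :
    cycSum x (n + 1) = cSum (fun n => PowerSeries.coeff n (eSer x)) (n + 1) := by
  obtain ⟨h1, -, h2⟩ := comp_series (eSer x) (constantCoeff_eSer x)
  obtain ⟨-, h3⟩ := walk_series x
  rw [← PowerSeries.coeff_mk (n + 1) (cycSum x), h2]
  congr 1
  set V := PowerSeries.mk (compSum (vWt fun n => PowerSeries.coeff n (eSer x)))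
  linear_combination V * h3 - PowerSeries.mk (cycSum x) * h1

end Finite

/-! ### Proper colorings of paths and cycles as walks -/

section Colorings

variable {R : Type*} [CommRing R] {ι : Type*} [Fintype ι] [DecidableEq ι]

/-- Summing a function of the two end letters over words without equal adjacent letters. -/
lemma sum_words (x : ι → R) (n : ℕ) (φ : ι → ι → R) :
    ∑ κ : Fin (n + 1) → ι, (if ∀ i : Fin n, κ i.castSucc ≠ κ i.succ then
      (∏ v, x (κ v)) * φ (κ 0) (κ (Fin.last n)) else 0) = ∑ i, ∑ j, walk x n i j * φ i j := by
  induction n generalizing φ with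
  | zero =>
    rw [← Fintype.sum_equiv (Equiv.funUnique (Fin 1) ι).symm (fun i => x i * φ i i)]
    · simp [walk]
    · intro i; simp
  | succ n ih =>
    rw [← Fintype.sum_equiv (Fin.consEquiv fun _ : Fin (n + 2) => ι) (fun p =>
      x p.1 * (if ∀ i : Fin n, p.2 i.castSucc ≠ p.2 i.succ then (∏ v, x (p.2 v)) *
        (fun k j => if p.1 ≠ k then φ p.1 j else 0) (p.2 0) (p.2 (Fin.last n)) else 0))]
    · rw [Fintype.sum_prod_type]
      refine Finset.sum_congr rfl fun i _ => ?_
      dsimp only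
      rw [← Finset.mul_sum]
      have := ih (fun k j => if i ≠ k then φ i j else 0)
      rw [this, Finset.sum_comm, Finset.mul_sum]
      refine Finset.sum_congr rfl fun j _ => ?_
      rw [walk, mul_assoc, Finset.sum_mul]
      congr 1
      refine Finset.sum_congr rfl fun k _ => ?_
      split_ifs <;> simp
    · rintro ⟨a, κ⟩
      have h1 : (∀ i : Fin (n + 1), (Fin.cons a κ : Fin (n + 2) → ι) i.castSucc ≠
          (Fin.cons a κ : Fin (n + 2) → ι) i.succ) ↔
          (a ≠ κ 0 ∧ ∀ i : Fin n, κ i.castSucc ≠ κ i.succ) := by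
        rw [Fin.forall_fin_succ]
        simp
      have h2 : (Fin.cons a κ : Fin (n + 2) → ι) (Fin.last (n + 1)) = κ (Fin.last n) := by
        rw [← Fin.succ_last, Fin.cons_succ]
      simp only [Fin.consEquiv_apply, h1, h2]
      simp only [Fin.prod_univ_succ, Fin.cons_zero, Fin.cons_succ]
      by_cases ha : a = κ 0 <;> by_cases hκ : ∀ i : Fin n, κ i.castSucc ≠ κ i.succ <;>
        simp [ha, hκ, mul_assoc]

open Classical in
/-- The chromatic polynomial of `G` with colors in the finite set `ι`, in the variables `x`. -/
noncomputable def colSum {V : Type} [Fintype V] (G : SimpleGraph V) (x : ι → R) : R :=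
  ∑ κ : V → ι, if ∀ v w, G.Adj v w → κ v ≠ κ w then ∏ v, x (κ v) else 0

lemma path_proper {α : Type*} (n : ℕ) (κ : Fin (n + 1) → α) :
    (∀ v w, (pathG (n + 1)).Adj v w → κ v ≠ κ w) ↔ ∀ i : Fin n, κ i.castSucc ≠ κ i.succ := by
  constructor
  · intro h i
    refine h _ _ ?_
    simp [pathG, Fin.ext_iff]
  · intro h v w hvw
    simp only [pathG, SimpleGraph.fromRel_adj] at hvw
    have key : ∀ v w : Fin (n + 1), (v : ℕ) + 1 = w → κ v ≠ κ w := by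
      intro v w e
      have := h ⟨v, by omega⟩
      rwa [show (⟨v, by omega⟩ : Fin n).castSucc = v from rfl,
        show (⟨v, by omega⟩ : Fin n).succ = w from Fin.ext e] at this
    rcases hvw.2 with e | e
    · exact key _ _ e
    · exact (key _ _ e).symm

lemma cycle_proper {α : Type*} (n : ℕ) (κ : Fin (n + 2) → α) :
    (∀ v w, (cycleG (n + 2)).Adj v w → κ v ≠ κ w) ↔
      (∀ i : Fin (n + 1), κ i.castSucc ≠ κ i.succ) ∧ κ 0 ≠ κ (Fin.last (n + 1)) := by
  rw [← path_proper]
  constructor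
  · intro h
    refine ⟨fun v w hvw => h v w ?_, h _ _ ?_⟩
    · simp only [pathG, cycleG, SimpleGraph.fromRel_adj] at hvw ⊢
      tauto
    · rw [cycleG, SimpleGraph.fromRel_adj]
      exact ⟨by simp [Fin.ext_iff], Or.inl (Or.inr ⟨rfl, rfl⟩)⟩
  · rintro ⟨h1, h2⟩ v w hvw
    have key : ∀ v w : Fin (n + 2), (v : ℕ) = 0 ∧ (w : ℕ) = n + 2 - 1 → κ v ≠ κ w := by
      rintro v w ⟨e1, e2⟩
      obtain rfl : v = 0 := Fin.ext e1
      obtain rfl : w = Fin.last (n + 1) := Fin.ext e2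
      exact h2
    simp only [pathG, cycleG, SimpleGraph.fromRel_adj] at hvw h1
    rcases hvw with ⟨hne, (e | e) | (e | e)⟩
    · exact h1 v w ⟨hne, Or.inl e⟩
    · exact key _ _ e
    · exact h1 v w ⟨hne, Or.inr e⟩
    · exact (key _ _ e).symm

lemma colSum_path (x : ι → R) (n : ℕ) : colSum (pathG n) x = pathSum x n := by
  cases n with
  | zero => simp [colSum, pathSum]
  | succ n =>
    have := sum_words x n fun _ _ => 1
    simp only [mul_one] at this
    simp only [colSum, pathSum, path_proper, ← this]
    refine Finset.sum_congr (by ext; simp) fun κ _ => ?_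
    congr

lemma colSum_cycle (x : ι → R) (n : ℕ) : colSum (cycleG (n + 2)) x = cycSum x (n + 2) := by
  have := sum_words x (n + 1) fun i j => if i ≠ j then 1 else 0
  simp only [mul_ite, mul_one, mul_zero] at this
  simp only [colSum, cycSum, cycle_proper, ← this]
  refine Finset.sum_congr (by ext; simp) fun κ _ => ?_
  rw [← ite_and]

end Colorings

/-! ### Restriction to finitely many variables -/

/-- Two series agree up to variables outside `S`: setting the variables outside `S` to `0` makes
them equal. -/
def Agree (S : Finset ℕ) (A B : SymF) : Prop :=
  ∀ d : ℕ →₀ ℕ, d.support ⊆ S → MvPowerSeries.coeff d A = MvPowerSeries.coeff d B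

lemma Agree.mul {S : Finset ℕ} {A B A₁ B₁ : SymF} (h : Agree S A B) (h₁ : Agree S A₁ B₁) :
    Agree S (A * A₁) (B * B₁) := by
  intro d hd
  rw [MvPowerSeries.coeff_mul, MvPowerSeries.coeff_mul]
  refine Finset.sum_congr rfl fun p hp => ?_
  have hp := Finset.HasAntidiagonal.mem_antidiagonal.mp hp
  rw [h _ ((Finsupp.support_mono (hp ▸ le_self_add)).trans hd),
    h₁ _ ((Finsupp.support_mono (hp ▸ le_add_self)).trans hd)]

lemma Agree.sum {S : Finset ℕ} {α : Type*} (s : Finset α) {f g : α → SymF}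
    (h : ∀ i ∈ s, Agree S (f i) (g i)) : Agree S (∑ i ∈ s, f i) (∑ i ∈ s, g i) := by
  intro d hd
  rw [map_sum, map_sum]
  exact Finset.sum_congr rfl fun i hi => h i hi d hd

lemma Agree.prod_map {S : Finset ℕ} {f g : ℕ → SymF} (h : ∀ i, Agree S (f i) (g i))
    (I : List ℕ) : Agree S (I.map f).prod (I.map g).prod := by
  induction I with
  | nil => intro d _; rfl
  | cons k J ih => simpa using (h k).mul ih

/-- The variables indexed by `S`. -/
noncomputable def vars (S : Finset ℕ) (i : S) : SymF := MvPowerSeries.X (i : ℕ)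

lemma prod_X {α : Type*} (s : Finset α) (f : α → ℕ) :
    ∏ v ∈ s, (MvPowerSeries.X (f v) : SymF) =
      MvPowerSeries.monomial (∑ v ∈ s, Finsupp.single (f v) 1) 1 := by
  classical
  induction s using Finset.induction_on with
  | empty => simp
  | insert a s ha ih =>
    rw [Finset.prod_insert ha, Finset.sum_insert ha, ih, MvPowerSeries.X_def,
      MvPowerSeries.monomial_mul_monomial, one_mul]

lemma agree_csf {V : Type} [Fintype V] (G : SimpleGraph V) (S : Finset ℕ) :
    Agree S (csf G) (colSum G (vars S)) := by
  classical
  intro d hd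
  have hdef : MvPowerSeries.coeff d (csf G) =
    (({κ : V → ℕ | (∀ v w, G.Adj v w → κ v ≠ κ w) ∧
        ∀ i : ℕ, {v | κ v = i}.ncard = d i}).ncard : ℚ) := by
    rfl
  have hfib : ∀ κ : V → ℕ, (∀ i : ℕ, {v | κ v = i}.ncard = d i) ↔
      d = ∑ v, Finsupp.single (κ v) 1 := by
    intro κ
    rw [Finsupp.ext_iff]
    refine forall_congr' fun i => ?_
    rw [Finsupp.finsetSum_apply]
    simp only [Finsupp.single_apply, Finset.sum_boole, Set.ncard_eq_toFinset_card',
      Set.toFinset_ofPred, Nat.cast_id]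
    exact eq_comm
  rw [hdef, colSum, map_sum]
  have hterm : ∀ κ : V → S, MvPowerSeries.coeff d
      (if ∀ v w, G.Adj v w → κ v ≠ κ w then ∏ v, vars S (κ v) else 0) =
      if (∀ v w, G.Adj v w → κ v ≠ κ w) ∧ d = ∑ v, Finsupp.single (κ v : ℕ) 1 then (1 : ℚ)
        else 0 := by
    intro κ
    rw [ite_and]
    split_ifs with h1 h2
    · simp only [vars]; rw [prod_X, MvPowerSeries.coeff_monomial, if_pos h2]
    · simp only [vars]; rw [prod_X, MvPowerSeries.coeff_monomial, if_neg h2]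
    · simp
  rw [Finset.sum_congr rfl fun κ _ => hterm κ, Finset.sum_boole, Nat.cast_inj,
    ← Set.ncard_coe_finset]
  symm
  refine Set.ncard_congr (fun κ _ v => (κ v : ℕ)) ?_ ?_ ?_
  · intro κ hκ
    rw [Finset.coe_filter] at hκ
    refine ⟨fun v w hvw he => hκ.2.1 v w hvw (Subtype.ext he), (hfib _).mpr hκ.2.2⟩
  · intro κ κ₁ _ _ h
    funext v
    exact Subtype.ext (congrFun h v)
  · rintro κ ⟨h1, h2⟩
    have hS : ∀ v, κ v ∈ S := fun v => by
      refine hd (Finsupp.mem_support_iff.mpr ?_)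
      rw [← h2 (κ v)]
      exact Set.ncard_ne_zero_of_mem (a := v) rfl
    refine ⟨fun v => ⟨κ v, hS v⟩, ?_, rfl⟩
    simp only [Finset.coe_filter, Finset.mem_univ, true_and, Set.mem_ofPred_eq]
    exact ⟨fun v w hvw he => h1 v w hvw (congrArg Subtype.val he), (hfib κ).mp h2⟩

open PowerSeries in
/-- The coefficients of `eSer` are the elementary symmetric polynomials. -/
lemma coeff_eSer {R ι : Type*} [CommRing R] [Fintype ι] (x : ι → R) (k : ℕ) :
    coeff k (eSer x) = ∑ t : Finset ι, if t.card = k then ∏ i ∈ t, x i else 0 := by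
  classical
  rw [eSer, Finset.prod_one_add, map_sum, Finset.powerset_univ]
  refine Finset.sum_congr rfl fun t _ => ?_
  rw [Finset.prod_mul_distrib, Finset.prod_const, ← map_prod, PowerSeries.coeff_mul_C,
    PowerSeries.coeff_X_pow]
  simp [eq_comm]

lemma agree_esymm (S : Finset ℕ) (k : ℕ) :
    Agree S (esymm k) (PowerSeries.coeff k (eSer (vars S))) := by
  classical
  intro d hd
  have hdef : MvPowerSeries.coeff d (esymm k) =
      if (d.sum fun _ e => e) = k ∧ ∀ i, d i ≤ 1 then (1 : ℚ) else 0 := by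
    change esymm k d = _
    unfold esymm
    congr
  rw [hdef, coeff_eSer, map_sum]
  have hind : ∀ (t : Finset S) (i : ℕ), (∑ v ∈ t, Finsupp.single (v : ℕ) 1 : ℕ →₀ ℕ) i =
      if i ∈ t.map (Function.Embedding.subtype _) then 1 else 0 := by
    intro t i
    have := Finset.sum_map t (Function.Embedding.subtype _)
      (fun v => (Finsupp.single v 1 : ℕ →₀ ℕ) i)
    simp only [Function.Embedding.coe_subtype] at this
    rw [Finsupp.finsetSum_apply, ← this]
    simp only [Finsupp.single_apply, Finset.sum_ite_eq']
  have hterm : ∀ t : Finset S, MvPowerSeries.coeff d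
      (if t.card = k then ∏ i ∈ t, vars S i else 0) =
      if t.card = k ∧ d = ∑ v ∈ t, Finsupp.single (v : ℕ) 1 then (1 : ℚ) else 0 := by
    intro t
    rw [ite_and]
    split_ifs with h1 h2
    · simp only [vars]; rw [prod_X, MvPowerSeries.coeff_monomial, if_pos h2]
    · simp only [vars]; rw [prod_X, MvPowerSeries.coeff_monomial, if_neg h2]
    · simp
  rw [Finset.sum_congr rfl fun t _ => hterm t]
  -- The only squarefree monomial with exponent `d` comes from the support of `d`.
  set T : Finset S := d.support.subtype (· ∈ S) with hT
  have hTmap : T.map (Function.Embedding.subtype _) = d.support :=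
    Finset.subtype_map_of_mem fun i hi => hd hi
  have huniq : ∀ t : Finset S, d = ∑ v ∈ t, Finsupp.single (v : ℕ) 1 → t = T := by
    intro t ht
    rw [← (Finset.map_injective (Function.Embedding.subtype _)).eq_iff, hTmap]
    ext i
    rw [Finsupp.mem_support_iff, ht, hind]
    simp
  rw [Finset.sum_eq_single T (fun t _ hne => if_neg fun h => hne (huniq t h.2)) (by simp)]
  have hcard : T.card = d.support.card := by rw [← hTmap, Finset.card_map]
  by_cases hle : ∀ i, d i ≤ 1
  · have hdT : d = ∑ v ∈ T, Finsupp.single (v : ℕ) 1 := by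
      ext i
      rw [hind, hTmap]
      have := hle i
      split_ifs with h
      · have := Finsupp.mem_support_iff.mp h; omega
      · exact Finsupp.notMem_support_iff.mp h
    have hsum : (d.sum fun _ e => e) = T.card := by
      rw [hcard, Finsupp.sum, Finset.card_eq_sum_ones]
      refine Finset.sum_congr rfl fun i hi => ?_
      have := Finsupp.mem_support_iff.mp hi
      have := hle i
      omega
    rw [hsum]
    simp [hle, ← hdT]
  · rw [if_neg (fun h => hle h.2), if_neg]
    rintro ⟨-, h⟩
    refine hle fun i => ?_
    rw [h, hind]
    split_ifs <;> simp

lemma hWt_eq {R : Type*} [CommRing R] (e : ℕ → R) (I : List ℕ) :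
    hWt e (fun k => (k : R)) I = (wC I : R) * (I.map e).prod := by
  cases I with
  | nil => simp [hWt, wC]
  | cons k J =>
    have : vWt e J = ((J.map (· - 1)).prod : ℕ) * (J.map e).prod := by
      induction J with
      | nil => simp [vWt]
      | cons j J ih =>
        simp only [vWt, List.map_cons, List.prod_cons] at ih ⊢
        rw [ih]; push_cast; ring
    simp only [hWt, wC, this, List.map_cons, List.prod_cons]
    push_cast; ring

end PathCycle

open PathCycle in
/-- For `0 ≤ l ≤ n - 2`,
`Σ_{k=0}^{l} X_{P_k} X_{C_{n-k}} = Σ_{I ⊨ n} (σ_I^+(l+1) - 1) w_I e_I`,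
where `X_{P_0} = 1`. -/
theorem stmt_4 (n l : ℕ) (h : l + 2 ≤ n) :
    ∑ k ∈ Finset.range (l + 1), csf (pathG k) * csf (cycleG (n - k)) =
      ∑ I : Composition n,
        (((sigmaPlus I.blocks (l + 1) : ℚ) - 1) * (wC I.blocks : ℚ)) •
          esymmProd I.blocks := by
  ext d
  set S := d.support with hS
  have hL : Agree S (∑ k ∈ Finset.range (l + 1), csf (pathG k) * csf (cycleG (n - k)))
      (∑ k ∈ Finset.range (l + 1), colSum (pathG k) (vars S) * colSum (cycleG (n - k)) (vars S)) :=
    Agree.sum _ fun k _ => (agree_csf _ S).mul (agree_csf _ S)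
  rw [hL d (Finset.Subset.refl _)]
  set e : ℕ → SymF := fun k => PowerSeries.coeff k (eSer (vars S)) with he
  have hM : ∑ k ∈ Finset.range (l + 1),
      colSum (pathG k) (vars S) * colSum (cycleG (n - k)) (vars S) =
      compSum (fun I => ((sigmaPlus I (l + 1) : SymF) - 1) * hWt e (fun k => (k : SymF)) I) n := by
    rw [← sum_compSum_mul_cSum e n l h]
    refine Finset.sum_congr rfl fun k hk => ?_
    rw [Finset.mem_range] at hk
    obtain ⟨m, hm⟩ : ∃ m, n - k = m + 2 := ⟨n - k - 2, by omega⟩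
    rw [hm, colSum_path, colSum_cycle, pathSum_eq, cycSum_eq]
  rw [hM, compSum]
  refine Agree.sum _ (fun I _ => ?_) d (Finset.Subset.refl _)
  intro d' hd'
  have hI := Agree.prod_map (fun k => agree_esymm S k) I.blocks d' hd'
  have hc : ((sigmaPlus I.blocks (l + 1) : SymF) - 1) * hWt e (fun k => (k : SymF)) I.blocks =
      (((sigmaPlus I.blocks (l + 1) : ℚ) - 1) * (wC I.blocks : ℚ)) • (I.blocks.map e).prod := by
    rw [hWt_eq, Algebra.smul_def]
    simp only [map_mul, map_sub, map_natCast, map_one]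
    ring
  rw [hc, esymmProd, MvPowerSeries.coeff_smul, MvPowerSeries.coeff_smul, hI]
end

section
/- For every integer n ≥ 2, the chromatic symmetric function of the cycle C_n has the power-sum expansion X_{C_n} = (−1)^n · p_n + Σ_{I ⊨ n} (−1)^{n − ℓ(I)} · i_1 · p_I, where i_1 is the first part of I. -/
/-! Setting all but finitely many variables to `0` reduces the claim to an identity in a
commutative ring, for colorings with a finite set of colors. There the proper colorings of the
cycle are the closed walks counted by `tr M ^ n`, where `M` has entries `x_a` for `a ≠ b` and `0`
on the diagonal, so that `M = x 1ᵀ - D` with `D = diag x`.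

Expand `M ^ n` by the position of the last rank-one factor `x 1ᵀ`. No such factor gives
`tr (-D) ^ n = (-1) ^ n p_n`; otherwise the contribution is a scalar `1ᵀ (-D) ^ i M ^ j x` with
`i + j = n - 1`. Put `q_k = (-1) ^ (k - 1) p_k` and let `c_l` be the sum of `q_I` over
compositions `I` of `l`. Induction on `j` (`sum_diagonal_pow_transfer_pow`) shows that this scalar
is the sum of `q_{n - l} c_l` over `l ≤ j`, so each `q_{n - l} c_l` is obtained `n - l` times in
total (`trace_transfer_pow`). Since `q_k c_{n - k}` collects the compositions of `n` with first
part `k`, this is the sum of `i_1 q_I` over all compositions. -/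

open Finset

open Classical in
/-- The power sum symmetric function `p_k = Σ_i x_i^k`. -/
noncomputable def psum (k : ℕ) : SymF :=
  fun d : ℕ →₀ ℕ => if ∃ i : ℕ, d = Finsupp.single i k then (1 : ℚ) else 0

/-- `p_I = p_{i_1} ⋯ p_{i_s}` for a list `I = [i_1, …, i_s]`. -/
noncomputable def psumProd (I : List ℕ) : SymF := (I.map psum).prod

/-! ### Splitting off the first part of a composition -/

/-- A nonempty composition is its first part followed by a composition of the rest. -/
lemma sum_composition_succ {R : Type*} [AddCommMonoid R] (n : ℕ) (F : List ℕ → R) :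
    ∑ I : Composition (n + 1), F I.blocks =
      ∑ k ∈ range (n + 1), ∑ J : Composition (n - k), F ((k + 1) :: J.blocks) := by
  rw [Finset.sum_sigma']
  symm
  refine Finset.sum_bij
    (fun (a : Σ k, Composition (n - k)) ha =>
      (⟨(a.1 + 1) :: a.2.blocks, ?_, ?_⟩ : Composition (n + 1))) ?_ ?_ ?_ ?_
  · intro i hi
    rcases List.mem_cons.1 hi with rfl | h
    · omega
    · exact a.2.blocks_pos h
  · have h1 : a.1 < n + 1 := by simpa using ha
    rw [List.sum_cons, a.2.blocks_sum]
    omega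
  · intros
    exact mem_univ _
  · rintro ⟨k, J⟩ _ ⟨k', J'⟩ _ h
    simp only [Composition.mk.injEq, List.cons.injEq, Nat.add_right_cancel_iff] at h
    obtain ⟨rfl, h⟩ := h
    rw [Composition.ext h]
  · rintro ⟨L, hpos, hsum⟩ _
    rcases L with _ | ⟨_ | k, L⟩
    · simp at hsum
    · exact absurd (hpos List.mem_cons_self) (lt_irrefl 0)
    · have hs := hsum
      rw [List.sum_cons] at hs
      exact ⟨⟨k, ⟨L, fun h => hpos (List.mem_cons_of_mem _ h), by omega⟩⟩,
        by simp; omega, rfl⟩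
  · intros
    rfl

/-- The sum of `q_I = q_{i_1} ⋯ q_{i_s}` over all compositions `I` of `n`. -/
def compSum {R : Type*} [CommRing R] (q : ℕ → R) (n : ℕ) : R :=
  ∑ I : Composition n, (I.blocks.map q).prod

lemma compSum_zero {R : Type*} [CommRing R] (q : ℕ → R) : compSum q 0 = 1 := by
  have h (I : Composition 0) : I.blocks = [] := by simp
  simp only [compSum, h]
  simp [composition_card]

lemma compSum_succ {R : Type*} [CommRing R] (q : ℕ → R) (n : ℕ) :
    compSum q (n + 1) = ∑ l ∈ range (n + 1), q (n - l + 1) * compSum q l := by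
  rw [compSum, sum_composition_succ n (fun L => (L.map q).prod), ← Finset.sum_flip]
  refine Finset.sum_congr rfl fun l hl => ?_
  have hl' : n - (n - l) = l := by have := mem_range.1 hl; omega
  rw [hl', compSum, Finset.mul_sum]
  simp

lemma sum_headI_mul {R : Type*} [CommRing R] (q : ℕ → R) (n : ℕ) :
    ∑ I : Composition (n + 1), (I.blocks.headI : R) * (I.blocks.map q).prod =
      ∑ l ∈ range (n + 1), ((n - l + 1 : ℕ) : R) * (q (n - l + 1) * compSum q l) := by
  rw [sum_composition_succ n (fun L => (L.headI : R) * (L.map q).prod), ← Finset.sum_flip]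
  refine Finset.sum_congr rfl fun l hl => ?_
  have hl' : n - (n - l) = l := by have := mem_range.1 hl; omega
  rw [hl', compSum, Finset.mul_sum, Finset.mul_sum]
  simp

/-! ### The transfer matrix of the cycle -/

section Transfer

variable {C R : Type*} [Fintype C] [DecidableEq C] [CommRing R]

/-- The transfer matrix of proper colorings: `x_a` off the diagonal of row `a`, and `0` on it. -/
def transfer (x : C → R) : Matrix C C R :=
  Matrix.of fun a b => if a = b then 0 else x a

/-- Signed power sums `(-1)^(k-1) p_k` in the finitely many variables `x`; the exponent `k + 1`
avoids truncated subtraction. -/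
def signedPsum (x : C → R) (k : ℕ) : R := (-1) ^ (k + 1) * ∑ c, x c ^ k

/-- The transfer matrix is the rank-one matrix `x 1ᵀ` plus a diagonal matrix. -/
lemma transfer_eq {C R : Type*} [DecidableEq C] [CommRing R] (x : C → R) :
    transfer x = Matrix.vecMulVec x 1 + Matrix.diagonal (-x) := by
  ext a b
  by_cases h : a = b <;> simp [transfer, h]

/-- `1ᵀ (-D)^i M^j x` for `D = diag x` and `M = x 1ᵀ - D`. -/
lemma sum_diagonal_pow_transfer_pow (x : C → R) (i j : ℕ) :
    ∑ c, (-x c) ^ i * ((transfer x ^ j).mulVec x) c =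
      ∑ l ∈ range (j + 1), signedPsum x (i + j - l + 1) * compSum (signedPsum x) l := by
  induction j generalizing i with
  | zero =>
    simp only [pow_zero, Matrix.one_mulVec, zero_add, Finset.sum_range_one, compSum_zero,
      signedPsum, Finset.mul_sum, mul_one]
    refine Finset.sum_congr rfl fun c _ => ?_
    rw [neg_pow]
    simp only [add_zero, Nat.sub_zero]
    ring
  | succ j ih =>
    have h0 := ih 0
    have hi := ih (i + 1)
    simp only [pow_zero, one_mul, zero_add] at h0
    rw [← compSum_succ] at h0
    have step (c : C) : ((transfer x ^ (j + 1)).mulVec x) c =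
        x c * compSum (signedPsum x) (j + 1) + -x c * ((transfer x ^ j).mulVec x) c := by
      rw [pow_succ', ← Matrix.mulVec_mulVec, ← h0]
      conv_lhs => rw [transfer_eq]
      rw [Matrix.add_mulVec, Pi.add_apply, Matrix.mulVec_diagonal, ← transfer_eq]
      congr 1
      simp [Matrix.mulVec, dotProduct, Matrix.vecMulVec_apply, Finset.mul_sum]
    simp only [step]
    rw [Finset.sum_range_succ]
    have e1 : i + 1 + j = i + (j + 1) := by omega
    rw [e1] at hi
    rw [← hi]
    have e2 : i + (j + 1) - (j + 1) + 1 = i + 1 := by omega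
    rw [e2, signedPsum, Finset.mul_sum, Finset.sum_mul, add_comm, ← Finset.sum_add_distrib]
    refine Finset.sum_congr rfl fun c _ => ?_
    rw [neg_pow (x c) i, neg_pow (x c) (i + 1)]
    ring

/-- Expansion of `(K + N)^n` according to the position of the last factor `K`. -/
lemma add_pow_last {A : Type*} [Ring A] (K N : A) (n : ℕ) :
    (K + N) ^ n = N ^ n + ∑ j ∈ range n, (K + N) ^ j * K * N ^ (n - 1 - j) := by
  induction n with
  | zero => simp
  | succ n ih =>
    rw [Finset.sum_range_succ, pow_succ, mul_add]
    nth_rewrite 2 [ih]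
    rw [add_mul, Finset.sum_mul, ← pow_succ]
    have : ∑ j ∈ range n, (K + N) ^ j * K * N ^ (n - 1 - j) * N =
        ∑ j ∈ range n, (K + N) ^ j * K * N ^ (n + 1 - 1 - j) := by
      refine Finset.sum_congr rfl fun j hj => ?_
      have : n + 1 - 1 - j = n - 1 - j + 1 := by have := mem_range.1 hj; omega
      rw [this, mul_assoc _ (N ^ _), ← pow_succ]
    rw [this]
    simp
    abel

lemma trace_transfer_pow (x : C → R) (n : ℕ) :
    (transfer x ^ (n + 1)).trace =
      (-1) ^ (n + 1) * ∑ c, x c ^ (n + 1) +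
        ∑ I : Composition (n + 1),
          (I.blocks.headI : R) * (I.blocks.map (signedPsum x)).prod := by
  have key (j : ℕ) (hj : j ∈ range (n + 1)) :
      ((transfer x) ^ j * Matrix.vecMulVec x 1 *
        Matrix.diagonal (-x) ^ (n + 1 - 1 - j)).trace =
      ∑ l ∈ range (j + 1), signedPsum x (n - l + 1) * compSum (signedPsum x) l := by
    have hj' : n - j + j = n := by have := mem_range.1 hj; omega
    have := sum_diagonal_pow_transfer_pow x (n - j) j
    rw [hj'] at this
    rw [← this, Matrix.mul_vecMulVec, Matrix.diagonal_pow, Matrix.trace]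
    refine Finset.sum_congr rfl fun c _ => ?_
    rw [Matrix.diag_apply, Matrix.mul_diagonal, Matrix.vecMulVec_apply]
    simp [mul_comm]
  have h := add_pow_last (Matrix.vecMulVec x 1) (Matrix.diagonal (-x)) (n + 1)
  rw [← transfer_eq] at h
  rw [h, Matrix.trace_add, Matrix.trace_sum, Finset.sum_congr rfl key, sum_headI_mul]
  congr 1
  · rw [Matrix.diagonal_pow, Matrix.trace_diagonal, Finset.mul_sum]
    refine Finset.sum_congr rfl fun c _ => ?_
    rw [Pi.pow_apply, Pi.neg_apply, neg_pow]
  -- The summand does not involve `j`, and `l` is counted once for each `j` in `[l, n]`.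
  · rw [Finset.sum_comm' (t' := range (n + 1)) (s' := fun l => Finset.Icc l n)]
    · refine Finset.sum_congr rfl fun l hl => ?_
      rw [Finset.sum_const, Nat.card_Icc, nsmul_eq_mul]
      have : n + 1 - l = n - l + 1 := by have := mem_range.1 hl; omega
      rw [this]
    · intro j l
      simp only [mem_range, mem_Icc]
      omega

/-- Entries of a matrix power as sums over walks from `a` to `b`. -/
lemma matrix_pow_apply_walk (M : Matrix C C R) (n : ℕ) (a b : C) :
    (M ^ (n + 1)) a b = ∑ κ : Fin n → C, ∏ i : Fin (n + 1),
      M ((Fin.cons a κ : Fin (n + 1) → C) i) ((Fin.snoc κ b : Fin (n + 1) → C) i) := by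
  induction n generalizing a with
  | zero => simp [Fin.snoc]
  | succ n ih =>
    rw [pow_succ', Matrix.mul_apply,
      ← (Fin.consEquiv (fun _ : Fin (n + 1) => C)).sum_comp, Fintype.sum_prod_type]
    refine Finset.sum_congr rfl fun c _ => ?_
    rw [ih, Finset.mul_sum]
    refine Finset.sum_congr rfl fun κ _ => ?_
    rw [Fin.prod_univ_succ (n := n + 1)]
    have hsnoc : (Fin.snoc ((Fin.consEquiv fun _ : Fin (n + 1) => C) (c, κ)) b :
        Fin (n + 2) → C) = Fin.cons c (Fin.snoc κ b : Fin (n + 1) → C) :=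
      (Fin.cons_snoc_eq_snoc_cons (β := C) c κ b).symm
    rw [hsnoc]
    simp only [Fin.consEquiv_apply, Fin.cons_zero, Fin.cons_succ]

/-- The trace of a matrix power as a sum over closed walks; the addition `i + 1` in `Fin (n + 1)`
is cyclic. -/
lemma trace_pow_walk (M : Matrix C C R) (n : ℕ) :
    (M ^ (n + 1)).trace =
      ∑ κ : Fin (n + 1) → C, ∏ i : Fin (n + 1), M (κ i) (κ (i + 1)) := by
  rw [← (Fin.consEquiv (fun _ : Fin (n + 1) => C)).sum_comp, Fintype.sum_prod_type, Matrix.trace]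
  refine Finset.sum_congr rfl fun c _ => ?_
  rw [Matrix.diag_apply, matrix_pow_apply_walk]
  refine Finset.sum_congr rfl fun κ _ => Finset.prod_congr rfl fun i _ => ?_
  simp only [Fin.consEquiv_apply]
  congr 1
  induction i using Fin.lastCases with
  | last => simp
  | cast i => rw [Fin.snoc_castSucc, Fin.coeSucc_eq_succ, Fin.cons_succ]

end Transfer

/-- Properness on the cycle is a condition on cyclically consecutive vertices. Having at least two
vertices ensures `i ≠ i + 1`. -/
lemma cycleG_proper_iff {α : Type*} (n : ℕ) (κ : Fin (n + 2) → α) :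
    (∀ v w, (cycleG (n + 2)).Adj v w → κ v ≠ κ w) ↔ ∀ i, κ i ≠ κ (i + 1) := by
  have hval (i : Fin (n + 2)) :
      ((i + 1 : Fin (n + 2)) : ℕ) = if (i : ℕ) = n + 1 then 0 else (i : ℕ) + 1 := by
    rw [Fin.val_add_one]
    simp only [Fin.ext_iff, Fin.val_last]
  have hr (v w : Fin (n + 2)) (h : (v : ℕ) + 1 = (w : ℕ) ∨ ((v : ℕ) = 0 ∧ (w : ℕ) = n + 2 - 1)) :
      v + 1 = w ∨ w + 1 = v := by
    simp only [Fin.ext_iff, hval]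
    split_ifs <;> omega
  constructor
  · intro h i
    apply h
    simp only [cycleG, SimpleGraph.fromRel_adj, ne_eq, Fin.ext_iff, hval]
    split_ifs <;> omega
  · intro h v w hvw
    simp only [cycleG, SimpleGraph.fromRel_adj] at hvw
    have : v + 1 = w ∨ w + 1 = v := by
      rcases hvw.2 with h | h
      · exact hr v w h
      · exact (hr w v h).symm
    rcases this with rfl | rfl
    · exact h v
    · exact (h w).symm

open Classical in
lemma sum_proper_colorings {C R : Type*} [Fintype C] [DecidableEq C] [CommRing R]
    (n : ℕ) (x : C → R) :
    ∑ κ : Fin (n + 2) → C,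
        (if ∀ v w, (cycleG (n + 2)).Adj v w → κ v ≠ κ w then ∏ v, x (κ v) else 0) =
      (transfer x ^ (n + 2)).trace := by
  rw [trace_pow_walk]
  refine Finset.sum_congr rfl fun κ _ => ?_
  simp only [cycleG_proper_iff]
  split_ifs with h
  · exact Finset.prod_congr rfl fun i _ => by simp [transfer, h i]
  · push Not at h
    obtain ⟨i, hi⟩ := h
    exact (Finset.prod_eq_zero (mem_univ i) (by simp [transfer, hi])).symm

/-! ### Restriction to finitely many variables -/

/-- `f` and `g` agree on the monomials involving only the variables `x_0, …, x_{m-1}`, that is,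
they become equal when all other variables are set to `0`. -/
def AgreeBelow (m : ℕ) (f g : SymF) : Prop :=
  ∀ d : ℕ →₀ ℕ, d.support ⊆ range m → MvPowerSeries.coeff d f = MvPowerSeries.coeff d g

lemma AgreeBelow.add {m : ℕ} {f f' g g' : SymF} (h : AgreeBelow m f g)
    (h' : AgreeBelow m f' g') : AgreeBelow m (f + f') (g + g') := fun d hd => by
  rw [map_add, map_add, h d hd, h' d hd]

lemma AgreeBelow.smul {m : ℕ} {f g : SymF} (h : AgreeBelow m f g) (a : ℚ) :
    AgreeBelow m (a • f) (a • g) := fun d hd => by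
  rw [map_smul, map_smul, h d hd]

lemma AgreeBelow.sum {ι : Type*} {m : ℕ} {s : Finset ι} {f g : ι → SymF}
    (h : ∀ i ∈ s, AgreeBelow m (f i) (g i)) : AgreeBelow m (∑ i ∈ s, f i) (∑ i ∈ s, g i) :=
  fun d hd => by
    rw [map_sum, map_sum]
    exact Finset.sum_congr rfl fun i hi => h i hi d hd

lemma AgreeBelow.mul {m : ℕ} {f f' g g' : SymF} (h : AgreeBelow m f g)
    (h' : AgreeBelow m f' g') : AgreeBelow m (f * f') (g * g') := fun d hd => by
  rw [MvPowerSeries.coeff_mul, MvPowerSeries.coeff_mul]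
  refine Finset.sum_congr rfl fun p hp => ?_
  have hp' := mem_antidiagonal.1 hp
  rw [h p.1, h' p.2]
  · exact (Finsupp.support_mono (hp' ▸ le_add_self)).trans hd
  · exact (Finsupp.support_mono (hp' ▸ le_self_add)).trans hd

lemma AgreeBelow.list_prod {m : ℕ} {f g : ℕ → SymF} (L : List ℕ)
    (h : ∀ k ∈ L, AgreeBelow m (f k) (g k)) :
    AgreeBelow m (L.map f).prod (L.map g).prod := by
  induction L with
  | nil => exact fun d _ => rfl
  | cons a L ih =>
    rw [List.map_cons, List.map_cons, List.prod_cons, List.prod_cons]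
    exact (h a List.mem_cons_self).mul (ih fun k hk => h k (List.mem_cons_of_mem _ hk))

/-- The variables `x_0, …, x_{m-1}`. -/
noncomputable def vars (m : ℕ) (i : Fin m) : SymF := MvPowerSeries.X (i : ℕ)

/-- The hypothesis `0 < k` matters: for `k = 0` the right-hand side is the constant `m`, whereas
`psum 0 = 1`. -/
lemma agreeBelow_psum (m k : ℕ) (hk : 0 < k) :
    AgreeBelow m (psum k) (∑ i, vars m i ^ k) := by
  classical
  intro d hd
  simp only [map_sum, vars, MvPowerSeries.coeff_X_pow]
  change (if ∃ i : ℕ, d = Finsupp.single i k then (1 : ℚ) else 0) = _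
  split_ifs with h
  · obtain ⟨i, rfl⟩ := h
    have hi : i < m := by
      rw [Finsupp.support_single _ hk.ne'] at hd
      simpa using hd
    rw [Finset.sum_eq_single (⟨i, hi⟩ : Fin m)]
    · simp
    · intro j _ hj
      rw [if_neg]
      intro h
      exact hj (Fin.ext ((Finsupp.single_left_injective hk.ne') h).symm)
    · simp
  · rw [Finset.sum_eq_zero]
    exact fun i _ => if_neg fun hi => h ⟨i, hi⟩

open Classical in
/-- The colorings counted by `csf` at a monomial in `x_0, …, x_{m-1}` only use the colors
below `m`. -/
lemma agreeBelow_csf {n : ℕ} (m : ℕ) (G : SimpleGraph (Fin n)) :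
    AgreeBelow m (csf G) (∑ κ : Fin n → Fin m,
      if ∀ v w, G.Adj v w → κ v ≠ κ w then ∏ v, vars m (κ v) else 0) := by
  intro d hd
  have hmon (κ : Fin n → Fin m) : MvPowerSeries.coeff d (∏ v, vars m (κ v)) =
      if ∀ i : ℕ, {v | (κ v : ℕ) = i}.ncard = d i then (1 : ℚ) else 0 := by
    have h1 : ∏ v, vars m (κ v) =
        MvPowerSeries.monomial (∑ v, Finsupp.single (κ v : ℕ) 1) (1 : ℚ) := by
      simp only [vars, MvPowerSeries.X, MvPowerSeries.prod_monomial, Finset.prod_const_one]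
    rw [h1, MvPowerSeries.coeff_monomial]
    congr 1
    rw [eq_iff_iff, Finsupp.ext_iff]
    refine forall_congr' fun i => ?_
    rw [Set.ncard_eq_toFinset_card', Finsupp.finsetSum_apply]
    simp only [Finsupp.single_apply, Finset.sum_boole, Set.toFinset_ofPred, Nat.cast_id]
    exact eq_comm
  have hset : {κ : Fin n → ℕ | (∀ v w, G.Adj v w → κ v ≠ κ w) ∧
        ∀ i : ℕ, {v | κ v = i}.ncard = d i} =
      (fun (κ : Fin n → Fin m) v => (κ v : ℕ)) '' {κ | (∀ v w, G.Adj v w → κ v ≠ κ w) ∧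
        ∀ i : ℕ, {v | (κ v : ℕ) = i}.ncard = d i} := by
    ext κ
    constructor
    · rintro ⟨h1, h2⟩
      -- A color that is used has a nonempty fibre, hence lies in the support of `d`.
      have hlt (v : Fin n) : κ v < m := by
        refine mem_range.1 (hd (Finsupp.mem_support_iff.2 ?_))
        rw [← h2]
        exact ((Set.ncard_pos (s := {w | κ w = κ v}) (Set.toFinite _)).2 ⟨v, rfl⟩).ne'
      refine ⟨fun v => ⟨κ v, hlt v⟩, ⟨fun v w hvw h => h1 v w hvw ?_, h2⟩, rfl⟩
      simpa using h
    · rintro ⟨κ, ⟨h1, h2⟩, rfl⟩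
      exact ⟨fun v w hvw h => h1 v w hvw (Fin.ext h), h2⟩
  have hinj : Function.Injective (fun (κ : Fin n → Fin m) v => (κ v : ℕ)) := fun κ κ' h =>
    funext fun v => Fin.ext (congrFun h v)
  change ((Set.ncard _ : ℕ) : ℚ) = _
  rw [hset, Set.ncard_image_of_injective _ hinj, Set.ncard_eq_toFinset_card', map_sum,
    Set.toFinset_ofPred, ← Finset.sum_boole]
  refine Finset.sum_congr rfl fun κ _ => ?_
  split_ifs <;> simp_all

/-- The sign `(-1)^(n - ℓ(I))` is distributed over the parts of `I`. -/
lemma prod_signedPsum {C R : Type*} [Fintype C] [CommRing R] (x : C → R) {n : ℕ}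
    (I : Composition n) :
    (I.blocks.map (signedPsum x)).prod =
      (-1) ^ (n - I.blocks.length) * (I.blocks.map fun k => ∑ c, x c ^ k).prod := by
  have h (L : List ℕ) : (L.map (signedPsum x)).prod =
      (-1) ^ (L.sum + L.length) * (L.map fun k => ∑ c, x c ^ k).prod := by
    induction L with
    | nil => simp
    | cons a L ih =>
      simp only [List.map_cons, List.prod_cons, List.sum_cons, List.length_cons, ih, signedPsum]
      ring
  rw [h, I.blocks_sum]
  congr 1
  have hle : I.blocks.length ≤ n := I.length_le
  have : n + I.blocks.length = (n - I.blocks.length) + 2 * I.blocks.length := by omega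
  rw [this, pow_add, pow_mul]
  simp

/-- For `n ≥ 2`,
`X_{C_n} = (-1)^n p_n + Σ_{I ⊨ n} (-1)^{n - ℓ(I)} i_1 p_I`. -/
theorem stmt_7 (n : ℕ) (hn : 2 ≤ n) :
    csf (cycleG n) =
      ((-1 : ℚ) ^ n) • psum n +
        ∑ I : Composition n,
          (((-1 : ℚ) ^ (n - I.blocks.length)) * (I.blocks.headI : ℚ)) •
            psumProd I.blocks := by
  obtain ⟨n, rfl⟩ : ∃ k, n = k + 2 := ⟨n - 2, by omega⟩
  ext d
  obtain ⟨m, hm⟩ := d.support.exists_nat_subset_range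
  rw [agreeBelow_csf m _ d hm, sum_proper_colorings, trace_transfer_pow]
  have hR := ((agreeBelow_psum m (n + 2) (by omega)).smul ((-1 : ℚ) ^ (n + 2))).add
    (AgreeBelow.sum (s := univ) fun (I : Composition (n + 2)) _ =>
      (AgreeBelow.list_prod I.blocks fun k hk =>
        agreeBelow_psum m k (I.blocks_pos hk)).smul
          ((-1 : ℚ) ^ (n + 2 - I.blocks.length) * (I.blocks.headI : ℚ)))
  refine Eq.trans ?_ (hR d hm).symm
  congr 2
  · rw [Algebra.smul_def]
    simp
  · refine Finset.sum_congr rfl fun I _ => ?_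
    rw [prod_signedPsum, Algebra.smul_def]
    simp only [map_mul, map_pow, map_neg, map_one, map_natCast]
    ring
end
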